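/- For every choice of probabilities p_v ∈ (0,1], letting π_0' be the twin policy of π_0, Bland(𝔇_n, π_0', 𝒩_{𝔇_n}) performs at least 2^n − 1 improving switches before terminating. -/

import Mathlib

/-! ## The Markov decision process `𝔅_n` -/

/-- Vertices of the MDP `𝔅_n`: a transportation vertex `t`, a sink `s`, a dummy vertex `d`,
and vertices `a i`, `b i` for `i ∈ {1,…,n}`. -/
inductive BV : Type where
  | t : BV
  | s : BV
  | d : BV
  | a : ℕ → BV
  | b : ℕ → BV
deriving DecidableEq

/-- The vertex `a i` for `i ∈ {1,…,n+1}`, with the convention `a (n+1) = s`. -/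
def aN (n i : ℕ) : BV := if i = n + 1 then BV.s else BV.a i

/-- The vertex `b i` for `i ∈ {1,…,n+1}`, with the convention `b (n+1) = d`. -/
def bN (n i : ℕ) : BV := if i = n + 1 then BV.d else BV.b i

/-- The vertex set of `𝔅_n`. -/
def IsBVertex (n : ℕ) : BV → Prop
  | BV.t => True
  | BV.s => True
  | BV.d => True
  | BV.a i => 1 ≤ i ∧ i ≤ n
  | BV.b i => 1 ≤ i ∧ i ≤ n

/-- The edge relation of `𝔅_n`: travel, enter, skip, board, stay, leave edges,
the edge `(d,s)` and the self-loop `(s,s)`. -/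
def BEdge (n : ℕ) (u v : BV) : Prop :=
  (∃ i, 1 ≤ i ∧ i ≤ n ∧ u = BV.t ∧ v = BV.a i) ∨
  (∃ i, 1 ≤ i ∧ i ≤ n ∧ u = BV.a i ∧ v = BV.b i) ∨
  (∃ i, 1 ≤ i ∧ i ≤ n ∧ u = BV.a i ∧ v = aN n (i + 1)) ∨
  (∃ i, 1 ≤ i ∧ i ≤ n ∧ u = BV.a i ∧ v = BV.t) ∨
  (∃ i, 1 ≤ i ∧ i ≤ n ∧ u = BV.b i ∧ v = bN n (i + 1)) ∨
  (∃ i, 1 ≤ i ∧ i ≤ n ∧ u = BV.b i ∧ v = aN n (i + 1)) ∨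
  (u = BV.d ∧ v = BV.s) ∨ (u = BV.s ∧ v = BV.s)

/-- The reward function of `𝔅_n`: `r(enter i) = 2^i`, `r(stay i) = 3/4`,
`r(board i) = -2^i + 5/4`, and reward `0` on all other edges. -/
def rB (n : ℕ) (u v : BV) : ℚ :=
  match u, v with
  | BV.a i, BV.b j => if i = j then 2 ^ i else 0
  | BV.a i, BV.t => -(2 ^ i) + 5 / 4
  | BV.b i, BV.b j => if j = i + 1 then 3 / 4 else 0
  | BV.b i, BV.d => if i = n then 3 / 4 else 0
  | _, _ => 0

/-- A policy for `𝔅_n` chooses an outgoing edge at every vertex. -/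
def IsBPolicy (n : ℕ) (π : BV → BV) : Prop := ∀ u, IsBVertex n u → BEdge n u (π u)

/-- A policy is weak unichain if it reaches the sink `s` from every vertex. -/
def BWeakUnichain (n : ℕ) (π : BV → BV) : Prop :=
  ∀ u, IsBVertex n u → ∃ k, π^[k] u = BV.s

open Classical in
/-- The value of a vertex `v` w.r.t. a (weak unichain) policy `π`:
the sum of the rewards along the path that `π` takes from `v` to the sink `s`. -/
noncomputable def BVal (n : ℕ) (π : BV → BV) (v : BV) : ℚ :=
  if h : ∃ k, π^[k] v = BV.s then
    ∑ i ∈ Finset.range (Nat.find h), rB n (π^[i] v) (π^[i + 1] v)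
  else 0

/-- The reduced costs of the edge `(u,v)` w.r.t. the policy `π`. -/
noncomputable def zB (n : ℕ) (π : BV → BV) (u v : BV) : ℚ :=
  rB n u v + BVal n π v - BVal n π u

/-- The edge `(u,v)` is an improving switch for `π` if its reduced costs are positive. -/
def BImproving (n : ℕ) (π : BV → BV) (u v : BV) : Prop :=
  BEdge n u v ∧ 0 < zB n π u v

/-- The Bland numbering `𝒩_{𝔅_n}` of the edges of `𝔅_n`. -/
def NB (n : ℕ) (u v : BV) : ℕ :=
  match u, v with
  | BV.t, BV.a i => i
  | BV.a i, BV.b _ => n + 1 + 5 * (i - 1)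
  | BV.a i, BV.a _ => n + 2 + 5 * (i - 1)
  | BV.a i, BV.s => n + 2 + 5 * (i - 1)
  | BV.a i, BV.t => n + 3 + 5 * (i - 1)
  | BV.b i, BV.b _ => n + 4 + 5 * (i - 1)
  | BV.b i, BV.d => n + 4 + 5 * (i - 1)
  | BV.b i, BV.a _ => n + 5 + 5 * (i - 1)
  | BV.b i, BV.s => n + 5 + 5 * (i - 1)
  | BV.d, BV.s => 6 * n + 1
  | BV.s, BV.s => 6 * n + 2
  | _, _ => 0

/-- One step of Bland's policy iteration with edge numbering `N`:
apply the improving switch with the smallest number. -/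
def IsBlandStep (n : ℕ) (N : BV → BV → ℕ) (π π' : BV → BV) : Prop :=
  ∃ u v, BImproving n π u v ∧ (∀ u' v', BImproving n π u' v' → N u v ≤ N u' v') ∧
    π' = Function.update π u v

/-- `BlandReaches n N π ψ` says that Bland's policy iteration started at `π` visits `ψ`. -/
def BlandReaches (n : ℕ) (N : BV → BV → ℕ) : (BV → BV) → (BV → BV) → Prop :=
  Relation.ReflTransGen (IsBlandStep n N)

/-- The canonical policy `π_0` for `0`: `travel 1`, `skip i` and `leave i` are active. -/
def pi0 (n : ℕ) : BV → BV := fun u =>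
  match u with
  | BV.t => BV.a 1
  | BV.a i => aN n (i + 1)
  | BV.b i => aN n (i + 1)
  | BV.d => BV.s
  | BV.s => BV.s

/-- The optimal policy `π_*`: `travel 1`, `enter i` for all `i`, `leave j` for `j < n`,
and `stay n` are active. -/
def piStar (n : ℕ) : BV → BV := fun u =>
  match u with
  | BV.t => BV.a 1
  | BV.a i => BV.b i
  | BV.b i => if i = n then BV.d else BV.a (i + 1)
  | BV.d => BV.s
  | BV.s => BV.s

/-! ## Bits and canonical policies -/

/-- The least significant set bit `ℓ_1(x)` (1-based). -/
noncomputable def lsb (x : ℕ) : ℕ := sInf {i | 1 ≤ i ∧ Nat.testBit x (i - 1)}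

/-- The most significant set bit `m(x)` (1-based). -/
noncomputable def msb1 (x : ℕ) : ℕ := sSup {i | 1 ≤ i ∧ Nat.testBit x (i - 1)}

/-- The least unset bit `ℓ_0(x)` (1-based). -/
noncomputable def lzero (x : ℕ) : ℕ := sInf {i | 1 ≤ i ∧ ¬ Nat.testBit x (i - 1)}

/-- `L_i(x) = max { j ≤ i-2 | x_j = 1 or j = 1 }` (1-based bits). -/
noncomputable def Lfun (i x : ℕ) : ℕ :=
  sSup {j | 1 ≤ j ∧ j ≤ i - 2 ∧ (Nat.testBit x (j - 1) ∨ j = 1)}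

/-- `IsCanonical n x π` says that `π` is the canonical policy `π_x` for `x`. -/
noncomputable def IsCanonical (n x : ℕ) (π : BV → BV) : Prop :=
  IsBPolicy n π ∧
  if x = 0 then
    π BV.t = BV.a 1 ∧
      ∀ i, 1 ≤ i → i ≤ n → π (BV.a i) = aN n (i + 1) ∧ π (BV.b i) = aN n (i + 1)
  else
    π BV.t = BV.a (lsb x) ∧
    π (BV.b (msb1 x)) = aN n (msb1 x + 1) ∧
    (∀ i, msb1 x < i → i ≤ n → π (BV.a i) = aN n (i + 1) ∧ π (BV.b i) = aN n (i + 1)) ∧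
    ∀ i, 1 ≤ i → i ≤ n → Nat.testBit x (i - 1) →
      π (BV.a i) = BV.b i ∧
      (i = 2 → π (BV.b 1) = BV.a 2 ∧ (¬ Nat.testBit x 0 → π (BV.a 1) = BV.a 2)) ∧
      (3 ≤ i → Nat.testBit x (i - 2) → π (BV.b (i - 1)) = BV.a i) ∧
      (3 ≤ i → ¬ Nat.testBit x (i - 2) →
        π (BV.b (i - 1)) = BV.b i ∧ π (BV.a (i - 1)) = BV.a i ∧
        π (BV.b (i - 2)) = BV.a (i - 1) ∧
        (Lfun i x < i - 2 →
          ∀ j, Lfun i x + 1 ≤ j → j ≤ i - 2 →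
            π (BV.a j) = BV.t ∧ π (BV.b (j - 1)) = BV.b j) ∧
        (Lfun i x = 1 → ¬ Nat.testBit x 0 → π (BV.a 1) = BV.t))

/-- Activating a list of edges in a policy, from left to right. -/
def activateList (π : BV → BV) (L : List (BV × BV)) : BV → BV :=
  L.foldl (fun σ e => Function.update σ e.1 e.2) π

/-- The canonical phases w.r.t. an odd number `x` (with `ℓ := ℓ_0(x)`), as a list of edges
to be activated in order. -/
noncomputable def phaseList (n x : ℕ) : List (BV × BV) :=
  let ℓ := lzero x
  (if Nat.testBit x ℓ then [(BV.b ℓ, aN n (ℓ + 1))] else []) ++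
  (if Nat.testBit x ℓ ∨ msb1 x < ℓ then [(BV.b (ℓ - 1), BV.b ℓ)] else []) ++
  [(BV.a ℓ, BV.b ℓ), (BV.t, BV.a ℓ)] ++
  ((List.range (ℓ - 2)).map fun j => (BV.a (j + 1), BV.t)) ++
  [(BV.a (ℓ - 1), BV.a ℓ)] ++
  (((List.range (ℓ - 3)).reverse).map fun j => (BV.b (j + 1), BV.b (j + 2))) ++
  (if ℓ = 2 then [(BV.b 1, BV.a 2)] else [])

/-! ## The Markov decision process `𝔇_n` -/

/-- Vertices of `𝔇_n`: the original vertices (`base`), and for every edge `(v,w)` of `𝔅_n`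
other than the self-loop, the gadget vertices `x v w`, `y v w`, `z v w`. -/
inductive DV : Type where
  | base : BV → DV
  | x : BV → BV → DV
  | y : BV → BV → DV
  | z : BV → BV → DV
deriving DecidableEq

/-- The edges of `𝔅_n` that get replaced by gadgets (all edges except the self-loop `(s,s)`). -/
def DEdgePair (n : ℕ) (v w : BV) : Prop := BEdge n v w ∧ v ≠ BV.s

/-- The vertex set of `𝔇_n`. -/
def IsDVertex (n : ℕ) : DV → Prop
  | DV.base v => IsBVertex n v
  | DV.x v w => DEdgePair n v w
  | DV.y v w => DEdgePair n v w
  | DV.z v w => DEdgePair n v w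

/-- The agent vertices of `𝔇_n` (all vertices except the randomization vertices `y v w`). -/
def IsDAgent (n : ℕ) : DV → Prop
  | DV.base v => IsBVertex n v
  | DV.x v w => DEdgePair n v w
  | DV.y _ _ => False
  | DV.z v w => DEdgePair n v w

/-- The agent edges of `𝔇_n`. -/
def DEdge (n : ℕ) (u u' : DV) : Prop :=
  (∃ v w, DEdgePair n v w ∧
    ((u = DV.base v ∧ u' = DV.x v w) ∨ (u = DV.x v w ∧ u' = DV.base v) ∨
     (u = DV.x v w ∧ u' = DV.y v w) ∨ (u = DV.z v w ∧ u' = DV.base w))) ∨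
  (u = DV.base BV.s ∧ u' = DV.base BV.s)

/-- The reward function of `𝔇_n`: the edge `(z v w, w)` carries the reward of the original
edge `(v,w)`; all other agent edges have reward `0`. -/
def rD (n : ℕ) (u u' : DV) : ℚ :=
  match u, u' with
  | DV.z v w, DV.base w' => if w' = w then rB n v w else 0
  | _, _ => 0

/-- A policy for `𝔇_n` chooses an outgoing agent edge at every agent vertex. -/
def IsDPolicy (n : ℕ) (π : DV → DV) : Prop := ∀ u, IsDAgent n u → DEdge n u (π u)

/-- `IsDVal n p π V` says that `V` satisfies the Bellman equations characterizing the value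
function of the policy `π` for `𝔇_n` with probabilities `p`, with `V s = 0`. -/
def IsDVal (n : ℕ) (p : BV → ℚ) (π : DV → DV) (V : DV → ℚ) : Prop :=
  V (DV.base BV.s) = 0 ∧
  (∀ u, IsDAgent n u → V u = rD n u (π u) + V (π u)) ∧
  (∀ v w, DEdgePair n v w →
    V (DV.y v w) = p v * V (DV.z v w) + (1 - p v) * V (DV.base v))

open Classical in
/-- The value function of a (weak unichain) policy `π` for `𝔇_n`: the unique solution of the
Bellman equations (normalized to `0` outside the vertex set). -/
noncomputable def DVal (n : ℕ) (p : BV → ℚ) (π : DV → DV) : DV → ℚ :=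
  if h : ∃! V : DV → ℚ, IsDVal n p π V ∧ ∀ u, ¬ IsDVertex n u → V u = 0 then
    h.exists.choose
  else fun _ => 0

/-- The reduced costs of an agent edge `(u,u')` of `𝔇_n` w.r.t. the policy `π`. -/
noncomputable def zD (n : ℕ) (p : BV → ℚ) (π : DV → DV) (u u' : DV) : ℚ :=
  rD n u u' + DVal n p π u' - DVal n p π u

/-- An agent edge of `𝔇_n` is an improving switch if its reduced costs are positive. -/
def DImproving (n : ℕ) (p : BV → ℚ) (π : DV → DV) (u u' : DV) : Prop :=
  DEdge n u u' ∧ 0 < zD n p π u u'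

/-- One (agent or positive-probability randomization) step of the process `𝔇_n` under `π`. -/
def DStep (n : ℕ) (p : BV → ℚ) (π : DV → DV) (u u' : DV) : Prop :=
  (IsDAgent n u ∧ u' = π u) ∨
  (∃ v w, DEdgePair n v w ∧ u = DV.y v w ∧
    ((u' = DV.z v w ∧ 0 < p v) ∨ (u' = DV.base v ∧ 0 < 1 - p v)))

/-- A policy for `𝔇_n` is weak unichain if it reaches `s` with probability one from every
vertex, i.e. `s` is reachable via active/positive-probability steps from every vertex. -/
def DWeakUnichain (n : ℕ) (p : BV → ℚ) (π : DV → DV) : Prop :=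
  ∀ u, IsDVertex n u → Relation.ReflTransGen (DStep n p π) u (DV.base BV.s)

/-- The twin policy of a policy `π` for `𝔅_n`: every vertex `v ≠ s` is `π v`-oriented. -/
def twin (π : BV → BV) : DV → DV := fun u =>
  match u with
  | DV.base v => if v = BV.s then DV.base BV.s else DV.x v (π v)
  | DV.x v w => if w = π v then DV.y v w else DV.base v
  | DV.y v w => DV.y v w
  | DV.z _ w => DV.base w

/-- The vertex numbering `𝒩_V` of `𝔅_n`: the order `(t, a 1, b 1, a 2, b 2, …, a n, b n, d, s)`. -/
def NV (n : ℕ) : BV → ℕ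
  | BV.t => 1
  | BV.a i => 2 * i
  | BV.b i => 2 * i + 1
  | BV.d => 2 * n + 2
  | BV.s => 2 * n + 3

/-- The specific probabilities `p_v = 2^{-𝒩_V(v)·(n+5)}`. -/
noncomputable def pSpec (n : ℕ) (v : BV) : ℚ := (2 : ℚ) ^ (-((NV n v * (n + 5) : ℕ) : ℤ))

/-- The set `B(v)` of agent edges of `𝔇_n` belonging to the vertex `v`. -/
def Belongs (n : ℕ) (v : BV) (e : DV × DV) : Prop :=
  ∃ w, DEdgePair n v w ∧
    (e = (DV.x v w, DV.y v w) ∨ e = (DV.base v, DV.x v w) ∨ e = (DV.x v w, DV.base v))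

/-- Applying the improving switch `e` to the policy `π` yields `π'`. -/
def DApply (n : ℕ) (p : BV → ℚ) (π : DV → DV) (e : DV × DV) (π' : DV → DV) : Prop :=
  DImproving n p π e.1 e.2 ∧ π' = Function.update π e.1 e.2

/-- One step of Bland's policy iteration on `𝔇_n` with edge numbering `N`. -/
def IsBlandStepD (n : ℕ) (p : BV → ℚ) (N : DV → DV → ℕ) (π π' : DV → DV) : Prop :=
  ∃ u u', DImproving n p π u u' ∧ (∀ a b, DImproving n p π a b → N u u' ≤ N a b) ∧
    π' = Function.update π u u'

/-- One step of Dantzig's policy iteration on `𝔇_n`: apply an improving switch of maximal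
reduced costs. -/
def DantzigStep (n : ℕ) (p : BV → ℚ) (π π' : DV → DV) : Prop :=
  ∃ u u', DImproving n p π u u' ∧
    (∀ a b, DImproving n p π a b → zD n p π a b ≤ zD n p π u u') ∧
    π' = Function.update π u u'

/-- The finite set of vertices of `𝔅_n`, as a `Finset`. -/
noncomputable def BVSet (n : ℕ) : Finset BV :=
  {BV.t, BV.d, BV.s} ∪ (Finset.Icc 1 n).image BV.a ∪ (Finset.Icc 1 n).image BV.b

/-- The finite set of agent vertices of `𝔇_n`, as a `Finset`. -/
noncomputable def DAgentSet (n : ℕ) : Finset DV := by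
  classical
  exact ((BVSet n).image DV.base) ∪
    (((BVSet n ×ˢ BVSet n).filter fun e => DEdgePair n e.1 e.2).image fun e => DV.x e.1 e.2) ∪
    (((BVSet n ×ˢ BVSet n).filter fun e => DEdgePair n e.1 e.2).image fun e => DV.z e.1 e.2)

/-- The objective of the Largest Increase rule: the sum of the values of all agent vertices. -/
noncomputable def LIobj (n : ℕ) (p : BV → ℚ) (π : DV → DV) : ℚ :=
  ∑ u ∈ DAgentSet n, DVal n p π u

/-- One step of the Largest Increase policy iteration on `𝔇_n`: apply an improving switch
maximizing the sum of all agent vertex values of the resulting policy. -/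
def LIStep (n : ℕ) (p : BV → ℚ) (π π' : DV → DV) : Prop :=
  ∃ u u', DImproving n p π u u' ∧
    (∀ a b, DImproving n p π a b →
      LIobj n p (Function.update π a b) ≤ LIobj n p (Function.update π u u')) ∧
    π' = Function.update π u u'

/-- `N` is a Bland numbering `𝒩_{𝔇_n}` for `𝔇_n`: it is injective on agent edges, the edges
`(x v w, v)` all come first, within each gadget `(x v w, y v w)` precedes `(v, x v w)`,
the gadget blocks are ordered according to `𝒩_{𝔅_n}`, and the self-loop comes last. -/
def IsDBlandNumbering (n : ℕ) (N : DV → DV → ℕ) : Prop :=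
  (∀ u₁ u₂ u₁' u₂', DEdge n u₁ u₂ → DEdge n u₁' u₂' → N u₁ u₂ = N u₁' u₂' →
    u₁ = u₁' ∧ u₂ = u₂') ∧
  (∀ v w v' w', DEdgePair n v w → DEdgePair n v' w' →
    N (DV.x v w) (DV.base v) < N (DV.x v' w') (DV.y v' w')) ∧
  (∀ v w, DEdgePair n v w → N (DV.x v w) (DV.y v w) < N (DV.base v) (DV.x v w)) ∧
  (∀ v w v' w', DEdgePair n v w → DEdgePair n v' w' → NB n v w < NB n v' w' →
    N (DV.base v) (DV.x v w) < N (DV.x v' w') (DV.y v' w')) ∧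
  (∀ v w, DEdgePair n v w → N (DV.base v) (DV.x v w) < N (DV.base BV.s) (DV.base BV.s))

/-!
Applying an improving switch `(u, w)` to a policy for `𝔅_n` corresponds, on the twin policies, to
three consecutive improving switches in `𝔇_n`: the gadget of the new edge is entered, `u` is
redirected to it, and the gadget of the old edge is closed. The agent vertices of `𝔅_n` keep their
values, so reduced costs in `𝔇_n` are reduced costs in `𝔅_n` scaled by `0` or `± p_v`, and
the gadgets inherit Bland's order. It thus suffices to count steps of Bland's rule on `𝔅_n`.

There the policy behaves like a binary counter: level `k` carries a set bit when `a k` enters.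
Suppose levels `1, …, j` are set and level `j + 1` has just been entered. Bland's rule then
* switches `t` to `a (j + 1)`, and `a 1, …, a (j - 1)` to `t`, which resets the bits below `j`;
* switches `a j` to `a (j + 1)`, and then `b (j - 2), …, b 1` one by one to the next level;
* fills the levels again. Each time levels `1, …, i` are full, level `i + 1` is entered and the
  same process runs recursively on the levels up to `i`.

If `R j` steps are spent after entering level `j + 1`, this gives
`R j ≥ 1 + ∑_{i < j} (1 + R i)` up to a few more steps, whence `R j ≥ 2 ^ j - 1`. Filling the levels
`1, …, n` one after the other from the policy `π_0` therefore takes at least `2 ^ n - 1` steps on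
`𝔅_n`, and three times as many on `𝔇_n`.
-/

open Function Set

/-! ### Weak unichain policies and their values -/

section Iterate

variable {α : Type*} {f g : α → α} {C : Set α} {x y : α}

lemma iterate_eq_of_eqOn (hC : MapsTo f C C) (hfg : EqOn g f C) (hx : x ∈ C) (k : ℕ) :
    g^[k] x = f^[k] x := by
  induction k with
  | zero => rfl
  | succ k ih => rw [iterate_succ_apply', iterate_succ_apply', ih, hfg (hC.iterate k hx)]

lemma iterate_update_of_forall_ne [DecidableEq α] (hx : ∀ k, f^[k] x ≠ y) (z : α) (k : ℕ) :
    (update f y z)^[k] x = f^[k] x :=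
  iterate_eq_of_eqOn (C := {x | ∀ k, f^[k] x ≠ y}) (fun _ hx k => hx (k + 1))
    (fun _ hx => update_of_ne (hx 0) z f) hx k

lemma iterate_ne_self_of_iterate_eq_fixed (hy : f y = y) (hxy : x ≠ y) (hx : ∃ k, f^[k] x = y)
    {j : ℕ} (hj : 0 < j) : f^[j] x ≠ x := by
  obtain ⟨k, hk⟩ := hx
  intro hper
  have hret : f^[j * k] x = x := (show IsPeriodicPt f j x from hper).mul_const k
  rw [← Nat.sub_add_cancel (Nat.le_mul_of_pos_left k hj), iterate_add_apply, hk,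
    iterate_fixed hy] at hret
  exact hxy hret.symm

end Iterate

section Edges

variable {n i : ℕ} {u v : BV}

lemma aN_of_le (h : i ≤ n) : aN n i = BV.a i := if_neg (by omega)

lemma bN_of_le (h : i ≤ n) : bN n i = BV.b i := if_neg (by omega)

lemma aN_top (n : ℕ) : aN n (n + 1) = BV.s := if_pos rfl

lemma bN_top (n : ℕ) : bN n (n + 1) = BV.d := if_pos rfl

@[elab_as_elim]
lemma BEdge.cases_on {motive : ∀ u v, BEdge n u v → Prop}
    (travel : ∀ i, 1 ≤ i → i ≤ n → ∀ h, motive BV.t (BV.a i) h)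
    (enter : ∀ i, 1 ≤ i → i ≤ n → ∀ h, motive (BV.a i) (BV.b i) h)
    (skip : ∀ i, 1 ≤ i → i ≤ n → ∀ h, motive (BV.a i) (aN n (i + 1)) h)
    (board : ∀ i, 1 ≤ i → i ≤ n → ∀ h, motive (BV.a i) BV.t h)
    (stay : ∀ i, 1 ≤ i → i ≤ n → ∀ h, motive (BV.b i) (bN n (i + 1)) h)
    (leave : ∀ i, 1 ≤ i → i ≤ n → ∀ h, motive (BV.b i) (aN n (i + 1)) h)
    (d : ∀ h, motive BV.d BV.s h) (s : ∀ h, motive BV.s BV.s h) (h : BEdge n u v) :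
    motive u v h := by
  obtain ⟨i, h1, h2, rfl, rfl⟩ | ⟨i, h1, h2, rfl, rfl⟩ | ⟨i, h1, h2, rfl, rfl⟩ |
    ⟨i, h1, h2, rfl, rfl⟩ | ⟨i, h1, h2, rfl, rfl⟩ | ⟨i, h1, h2, rfl, rfl⟩ | ⟨rfl, rfl⟩ |
    ⟨rfl, rfl⟩ := id h
  exacts [travel i h1 h2 h, enter i h1 h2 h, skip i h1 h2 h, board i h1 h2 h, stay i h1 h2 h,
    leave i h1 h2 h, d h, s h]

lemma BEdge.isBVertex_left (h : BEdge n u v) : IsBVertex n u := by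
  cases h using BEdge.cases_on <;> trivial

lemma BEdge.isBVertex_right (h : BEdge n u v) : IsBVertex n v := by
  cases h using BEdge.cases_on <;> grind [IsBVertex, aN, bN]

lemma bEdge_t_iff : BEdge n BV.t v ↔ ∃ i, 1 ≤ i ∧ i ≤ n ∧ v = BV.a i := by
  simp [BEdge]

lemma bEdge_a_iff : BEdge n (BV.a i) v ↔
    (1 ≤ i ∧ i ≤ n) ∧ (v = BV.b i ∨ v = aN n (i + 1) ∨ v = BV.t) := by
  simp only [BEdge]; grind

lemma bEdge_b_iff : BEdge n (BV.b i) v ↔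
    (1 ≤ i ∧ i ≤ n) ∧ (v = bN n (i + 1) ∨ v = aN n (i + 1)) := by
  simp only [BEdge]; grind

lemma bEdge_d_iff : BEdge n BV.d v ↔ v = BV.s := by
  simp [BEdge]

lemma bEdge_s_iff : BEdge n BV.s v ↔ v = BV.s := by
  simp [BEdge]

lemma rB_enter (n i : ℕ) : rB n (BV.a i) (BV.b i) = 2 ^ i := if_pos rfl

lemma rB_skip (n i j : ℕ) : rB n (BV.a i) (aN n j) = 0 := by
  unfold aN; split_ifs <;> rfl

lemma rB_stay (n i : ℕ) : rB n (BV.b i) (bN n (i + 1)) = 3 / 4 := by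
  unfold bN; split_ifs with h
  · exact if_pos (by omega)
  · exact if_pos rfl

lemma rB_leave (n i j : ℕ) : rB n (BV.b i) (aN n j) = 0 := by
  unfold aN; split_ifs <;> rfl

end Edges

section Value

variable {n : ℕ} {π σ : BV → BV} {v : BV}

lemma BVal_s (n : ℕ) (π : BV → BV) : BVal n π BV.s = 0 := by
  have h : ∃ k, π^[k] BV.s = BV.s := ⟨0, rfl⟩
  rw [BVal, dif_pos h, (Nat.find_eq_zero h).2 rfl, Finset.sum_range_zero]

lemma BVal_eq_add (hv : v ≠ BV.s) (h : ∃ k, π^[k] v = BV.s) :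
    BVal n π v = rB n v (π v) + BVal n π (π v) := by
  classical
  obtain ⟨k, hk⟩ := id h
  obtain ⟨k, rfl⟩ : ∃ j, k = j + 1 :=
    Nat.exists_eq_succ_of_ne_zero (by rintro rfl; exact hv hk)
  have h' : ∃ k, π^[k] (π v) = BV.s := ⟨k, hk⟩
  rw [BVal, BVal, dif_pos h, dif_pos h', Nat.find_comp_succ h h' hv, Finset.sum_range_succ',
    add_comm]
  rfl

lemma BVal_congr (h : ∀ k, σ^[k] v = π^[k] v) : BVal n σ v = BVal n π v := by
  have reach : (∃ k, σ^[k] v = BV.s) ↔ ∃ k, π^[k] v = BV.s := by simp only [h]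
  by_cases hσ : ∃ k, σ^[k] v = BV.s
  · rw [BVal, BVal, dif_pos hσ, dif_pos (reach.1 hσ)]
    simp only [h]
  · rw [BVal, BVal, dif_neg hσ, dif_neg (mt reach.2 hσ)]

end Value

/-- The weak unichain policies for `𝔅_n`: those for which `BVal` is the value function. -/
structure IsProper (n : ℕ) (π : BV → BV) : Prop where
  isBPolicy : IsBPolicy n π
  weakUnichain : BWeakUnichain n π

namespace IsProper

variable {n : ℕ} {π : BV → BV} {v : BV}

lemma apply_s (h : IsProper n π) : π BV.s = BV.s := bEdge_s_iff.1 (h.isBPolicy _ trivial)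

lemma isBVertex_apply (h : IsProper n π) (hv : IsBVertex n v) : IsBVertex n (π v) :=
  (h.isBPolicy v hv).isBVertex_right

lemma BVal_eq (h : IsProper n π) (hv : IsBVertex n v) (hs : v ≠ BV.s) :
    BVal n π v = rB n v (π v) + BVal n π (π v) :=
  BVal_eq_add hs (h.weakUnichain v hv)

lemma zB_apply (h : IsProper n π) (hv : IsBVertex n v) : zB n π v (π v) = 0 := by
  rcases eq_or_ne v BV.s with rfl | hs
  · simp [zB, h.apply_s, rB]
  · rw [zB, h.BVal_eq hv hs]; ring

lemma iterate_apply_ne (h : IsProper n π) (hv : IsBVertex n v) (hs : v ≠ BV.s) (k : ℕ) :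
    π^[k] (π v) ≠ v :=
  iterate_ne_self_of_iterate_eq_fixed h.apply_s hs (h.weakUnichain v hv) k.succ_pos

lemma BVal_unique (h : IsProper n π) {V : BV → ℚ} (h0 : V BV.s = 0)
    (hV : ∀ v, IsBVertex n v → v ≠ BV.s → V v = rB n v (π v) + V (π v)) (hv : IsBVertex n v) :
    V v = BVal n π v := by
  obtain ⟨k, hk⟩ := h.weakUnichain v hv
  induction k generalizing v with
  | zero => obtain rfl : v = BV.s := hk; rw [h0, BVal_s]
  | succ k ih =>
    rcases eq_or_ne v BV.s with rfl | hs
    · rw [h0, BVal_s]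
    · rw [hV v hv hs, h.BVal_eq hv hs, ih (h.isBVertex_apply hv) hk]

end IsProper

/-- The value function of the optimal policy `π_*`. -/
def optimalValue (n : ℕ) : BV → ℚ
  | BV.t => 2 ^ (n + 1) - 2 + 3 / 4
  | BV.s => 0
  | BV.d => 0
  | BV.a i => 2 ^ (n + 1) - 2 ^ i + 3 / 4
  | BV.b i => 2 ^ (n + 1) - 2 ^ (i + 1) + 3 / 4

section Switch

variable {n : ℕ} {π π' : BV → BV} {u v w : BV}

lemma two_le_two_pow {i : ℕ} (h : 1 ≤ i) : (2 : ℚ) ≤ 2 ^ i :=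
  le_self_pow₀ one_le_two (by omega)

lemma rB_add_optimalValue_le (h : BEdge n u v) :
    rB n u v + optimalValue n v ≤ optimalValue n u := by
  cases h using BEdge.cases_on
  case skip i h1 h2 _ | stay i h1 h2 _ | leave i h1 h2 _ =>
    have hp := two_le_two_pow h1
    rcases h2.eq_or_lt with rfl | h2
    · simp only [aN_top, bN_top, rB, optimalValue, pow_succ, if_true]; linarith
    · simp only [aN_of_le (Nat.succ_le_of_lt h2), bN_of_le (Nat.succ_le_of_lt h2), rB,
        optimalValue, pow_succ, if_true]
      linarith
  case travel i h1 _ _ => simp only [rB, optimalValue]; linarith [two_le_two_pow h1]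
  all_goals simp only [rB, optimalValue, if_true, pow_succ]; linarith

/- The gap between the optimal value and the old value weakly decreases along every edge of the
new policy, and strictly at the switched vertex, which therefore cannot lie on a cycle. -/
lemma iterate_apply_ne_of_improving (h : IsProper n π) (hi : BImproving n π u w) (k : ℕ) :
    (update π u w)^[k] w ≠ u := by
  set gap : BV → ℚ := fun v => optimalValue n v - BVal n π v with hgap
  have gap_w : gap w < gap u := by
    have hz := hi.2
    have := rB_add_optimalValue_le hi.1
    simp only [zB] at hz
    simp only [hgap]; linarith
  have gap_step : ∀ v, IsBVertex n v → gap (update π u w v) ≤ gap v := by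
    intro v hv
    rcases eq_or_ne v u with rfl | hvu
    · rw [update_self]; exact gap_w.le
    rw [update_of_ne hvu]
    rcases eq_or_ne v BV.s with rfl | hs
    · rw [h.apply_s]
    · have := rB_add_optimalValue_le (h.isBPolicy v hv)
      have := h.BVal_eq hv hs
      simp only [hgap]; linarith
  have vertex_step : ∀ v, IsBVertex n v → IsBVertex n (update π u w v) := by
    intro v hv
    rcases eq_or_ne v u with rfl | hvu
    · rw [update_self]; exact hi.1.isBVertex_right
    · rw [update_of_ne hvu]; exact h.isBVertex_apply hv
  have gap_iterate : IsBVertex n ((update π u w)^[k] w) ∧ gap ((update π u w)^[k] w) ≤ gap w := by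
    induction k with
    | zero => exact ⟨hi.1.isBVertex_right, le_rfl⟩
    | succ k ih =>
      rw [iterate_succ_apply']
      exact ⟨vertex_step _ ih.1, (gap_step _ ih.1).trans ih.2⟩
  intro hu
  rw [hu] at gap_iterate
  exact gap_w.not_ge gap_iterate.2

lemma iterate_update_of_improving (h : IsProper n π) (hi : BImproving n π u w) (k : ℕ) :
    (update π u w)^[k] w = π^[k] w := by
  have := iterate_update_of_forall_ne (iterate_apply_ne_of_improving h hi) (π u) k
  rw [update_idem, update_eq_self] at this
  exact this.symm

lemma IsProper.update (h : IsProper n π) (hi : BImproving n π u w) :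
    IsProper n (update π u w) := by
  constructor
  · intro v hv
    rcases eq_or_ne v u with rfl | hvu
    · rw [update_self]; exact hi.1
    · rw [update_of_ne hvu]; exact h.isBPolicy v hv
  · have reach_w : ∃ k, (Function.update π u w)^[k] w = BV.s := by
      simp only [iterate_update_of_improving h hi]
      exact h.weakUnichain w hi.1.isBVertex_right
    intro v hv
    obtain ⟨k, hk⟩ := h.weakUnichain v hv
    induction k generalizing v with
    | zero => exact ⟨0, hk⟩
    | succ k ih =>
      rcases eq_or_ne v u with rfl | hvu
      · obtain ⟨j, hj⟩ := reach_w
        exact ⟨j + 1, by rwa [iterate_succ_apply, update_self]⟩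
      · obtain ⟨j, hj⟩ := ih _ (h.isBVertex_apply hv) hk
        exact ⟨j + 1, by rwa [iterate_succ_apply, update_of_ne hvu]⟩

lemma BImproving.ne_s (h : BImproving n π u w) : u ≠ BV.s := by
  rintro rfl
  obtain rfl := bEdge_s_iff.1 h.1
  exact absurd h.2 (by simp [zB, rB])

lemma zB_update_apply (h : IsProper n π) (hi : BImproving n π u w) :
    zB n (update π u w) u (π u) = -zB n π u w := by
  have hs := hi.ne_s
  have hu := hi.1.isBVertex_left
  have val_w : BVal n (update π u w) w = BVal n π w :=
    BVal_congr (iterate_update_of_improving h hi)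
  have val_apply : BVal n (update π u w) (π u) = BVal n π (π u) :=
    BVal_congr (iterate_update_of_forall_ne (h.iterate_apply_ne hu hs) w)
  have val_u := (h.update hi).BVal_eq hu hs
  rw [update_self, val_w] at val_u
  rw [zB, zB, val_apply, val_u, h.BVal_eq hu hs]
  ring

lemma IsProper.blandStep {N : BV → BV → ℕ} (h : IsProper n π) (hs : IsBlandStep n N π π') :
    IsProper n π' := by
  obtain ⟨u, w, hi, -, rfl⟩ := hs
  exact h.update hi

end Switch

/-! ### The simulation of `𝔅_n` inside `𝔇_n` -/

section StepsAtLeast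

/-- `StepsAtLeast r x c y`: some `r`-path from `x` to `y` has at least `c` steps. -/
inductive StepsAtLeast {α : Type*} (r : α → α → Prop) (x : α) : ℕ → α → Prop
  | zero : StepsAtLeast r x 0 x
  | tail {c c' : ℕ} {y z : α} :
      StepsAtLeast r x c y → r y z → c' ≤ c + 1 → StepsAtLeast r x c' z

variable {α β : Type*} {r : α → α → Prop} {c c' : ℕ} {x y z : α}

lemma StepsAtLeast.single (h : r x y) : StepsAtLeast r x 1 y := .tail .zero h le_rfl

lemma StepsAtLeast.trans (hxy : StepsAtLeast r x c y) (hyz : StepsAtLeast r y c' z) :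
    StepsAtLeast r x (c + c') z := by
  induction hyz with
  | zero => exact hxy
  | tail _ hr hc ih => exact .tail ih hr (by omega)

lemma StepsAtLeast.mono (h : StepsAtLeast r x c y) (hc : c' ≤ c) : StepsAtLeast r x c' y := by
  cases h with
  | zero => obtain rfl : c' = 0 := by omega
            exact .zero
  | tail h hr hc₁ => exact .tail h hr (hc.trans hc₁)

lemma StepsAtLeast.invariant {P : α → Prop} (hP : ∀ x y, P x → r x y → P y)
    (h : StepsAtLeast r x c y) (hx : P x) : P y := by
  induction h with
  | zero => exact hx
  | tail _ hr _ ih => exact hP _ _ ih hr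

lemma StepsAtLeast.map {q : β → β → Prop} {k : ℕ} (g : α → β) {P : α → Prop}
    (hP : ∀ x y, P x → r x y → P y)
    (hg : ∀ x y, P x → r x y → StepsAtLeast q (g x) k (g y)) (h : StepsAtLeast r x c y)
    (hx : P x) : StepsAtLeast q (g x) (k * c) (g y) := by
  induction h with
  | zero => exact .zero
  | tail hxy hr hc ih =>
    refine (ih.trans (hg _ _ (hxy.invariant hP hx) hr)).mono ?_
    calc k * _ ≤ k * (_ + 1) := Nat.mul_le_mul_left k hc
      _ = _ := Nat.mul_succ k _

lemma StepsAtLeast.le_of_terminal (hr : Relator.RightUnique r) {f : ℕ → α} {m : ℕ}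
    (hstep : ∀ k < m, r (f k) (f (k + 1))) (hterm : ∀ y, ¬ r (f m) y)
    (h : StepsAtLeast r (f 0) c y) : c ≤ m := by
  suffices ∃ k ≤ m, c ≤ k ∧ f k = y by obtain ⟨k, hk, hc, -⟩ := this; exact hc.trans hk
  induction h with
  | zero => exact ⟨0, m.zero_le, le_rfl, rfl⟩
  | @tail _ _ y z _ hyz hc ih =>
    obtain ⟨k, hk, hck, rfl⟩ := ih
    have hkm : k < m := hk.lt_of_ne (by rintro rfl; exact hterm z hyz)
    exact ⟨k + 1, hkm, by omega, hr (hstep k hkm) hyz⟩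

end StepsAtLeast

open Classical in
/-- The policy for `𝔇_n` that leaves every vertex `v ≠ s` through the gadget of `(v, σ v)` and
enters the randomization vertex exactly in the gadgets of `M`. -/
noncomputable def gadgetPolicy (σ : BV → BV) (M : BV → BV → Prop) : DV → DV
  | DV.base v => if v = BV.s then DV.base BV.s else DV.x v (σ v)
  | DV.x v w => if M v w then DV.y v w else DV.base v
  | DV.y v w => DV.y v w
  | DV.z _ w => DV.base w

lemma twin_eq_gadgetPolicy (π : BV → BV) : twin π = gadgetPolicy π (fun v w => w = π v) := by
  funext u
  cases u <;> simp [twin, gadgetPolicy]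

open Classical in
/-- The value function of `gadgetPolicy σ M` when `M` contains the graph of `σ`. -/
noncomputable def gadgetVal (n : ℕ) (p : BV → ℚ) (σ : BV → BV) (M : BV → BV → Prop) (u : DV) : ℚ :=
  if IsDVertex n u then
    match u with
    | DV.base v => BVal n σ v
    | DV.x v w => if M v w then BVal n σ v + p v * zB n σ v w else BVal n σ v
    | DV.y v w => BVal n σ v + p v * zB n σ v w
    | DV.z v w => rB n v w + BVal n σ w
  else 0

section GadgetVal

variable {n : ℕ} {p : BV → ℚ} {σ : BV → BV} {M : BV → BV → Prop} {v w : BV}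

lemma gadgetVal_base (hv : IsBVertex n v) : gadgetVal n p σ M (DV.base v) = BVal n σ v :=
  if_pos hv

lemma gadgetVal_x_of_mem (h : DEdgePair n v w) (hM : M v w) :
    gadgetVal n p σ M (DV.x v w) = BVal n σ v + p v * zB n σ v w :=
  (if_pos h).trans (if_pos hM)

lemma gadgetVal_x_of_notMem (h : DEdgePair n v w) (hM : ¬ M v w) :
    gadgetVal n p σ M (DV.x v w) = BVal n σ v :=
  (if_pos h).trans (if_neg hM)

lemma gadgetVal_y (h : DEdgePair n v w) :
    gadgetVal n p σ M (DV.y v w) = BVal n σ v + p v * zB n σ v w :=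
  if_pos h

lemma gadgetVal_z (h : DEdgePair n v w) :
    gadgetVal n p σ M (DV.z v w) = rB n v w + BVal n σ w :=
  if_pos h

lemma isDVal_gadgetVal (hσ : IsProper n σ) (hM : ∀ v, M v (σ v)) :
    IsDVal n p (gadgetPolicy σ M) (gadgetVal n p σ M) := by
  refine ⟨(gadgetVal_base (v := BV.s) trivial).trans (BVal_s n σ), ?_, ?_⟩
  · rintro (v | ⟨v, w⟩ | ⟨v, w⟩ | ⟨v, w⟩) hu
    · by_cases hs : v = BV.s
      · subst hs
        simp [gadgetPolicy, rD]
      · have he : DEdgePair n v (σ v) := ⟨hσ.isBPolicy v hu, hs⟩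
        simp [gadgetPolicy, hs, rD, gadgetVal_base hu, gadgetVal_x_of_mem he (hM v),
          hσ.zB_apply hu]
    · have he : DEdgePair n v w := hu
      by_cases hm : M v w
      · simp [gadgetPolicy, rD, hm, gadgetVal_x_of_mem he hm, gadgetVal_y he]
      · simp [gadgetPolicy, rD, hm, gadgetVal_x_of_notMem he hm,
          gadgetVal_base he.1.isBVertex_left]
    · exact hu.elim
    · have he : DEdgePair n v w := hu
      simp [gadgetPolicy, rD, gadgetVal_z he, gadgetVal_base he.1.isBVertex_right]
  · intro v w he
    rw [gadgetVal_y he, gadgetVal_z he, gadgetVal_base he.1.isBVertex_left, zB]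
    ring

lemma IsDVal.base_eq_BVal (hp : ∀ v, IsBVertex n v → v ≠ BV.s → 0 < p v) (hσ : IsProper n σ)
    (hM : ∀ v, M v (σ v)) {V : DV → ℚ} (hV : IsDVal n p (gadgetPolicy σ M) V)
    (hv : IsBVertex n v) : V (DV.base v) = BVal n σ v := by
  obtain ⟨V_s, V_agent, V_y⟩ := hV
  refine hσ.BVal_unique (V := fun v => V (DV.base v)) V_s (fun v hv hs => ?_) hv
  have he : DEdgePair n v (σ v) := ⟨hσ.isBPolicy v hv, hs⟩
  have hbase := V_agent (DV.base v) hv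
  have hx := V_agent (DV.x v (σ v)) he
  have hz := V_agent (DV.z v (σ v)) he
  simp only [gadgetPolicy, hs, if_false, if_true, rD, hM v, zero_add] at hbase hx hz
  have hy := V_y v (σ v) he
  rw [← hx, ← hbase] at hy
  refine mul_left_cancel₀ (hp v hv hs).ne' ?_
  rw [← hz]
  linarith

lemma IsDVal.eq_gadgetVal (hp : ∀ v, IsBVertex n v → v ≠ BV.s → 0 < p v) (hσ : IsProper n σ)
    (hM : ∀ v, M v (σ v)) {V : DV → ℚ} (hV : IsDVal n p (gadgetPolicy σ M) V)
    (hV0 : ∀ u, ¬ IsDVertex n u → V u = 0) : V = gadgetVal n p σ M := by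
  have V_base {v} (hv : IsBVertex n v) := hV.base_eq_BVal hp hσ hM hv
  obtain ⟨-, V_agent, V_y⟩ := hV
  have V_z {v w} (he : DEdgePair n v w) : V (DV.z v w) = rB n v w + BVal n σ w := by
    rw [V_agent (DV.z v w) he, ← V_base he.1.isBVertex_right]
    simp only [gadgetPolicy, rD, if_true]
  have V_y' {v w} (he : DEdgePair n v w) : V (DV.y v w) = BVal n σ v + p v * zB n σ v w := by
    rw [V_y v w he, V_z he, V_base he.1.isBVertex_left, zB]
    ring
  funext u
  by_cases hu : IsDVertex n u
  swap
  · exact (hV0 u hu).trans (if_neg hu).symm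
  rcases u with v | ⟨v, w⟩ | ⟨v, w⟩ | ⟨v, w⟩
  · rw [V_base hu, gadgetVal_base hu]
  · by_cases hm : M v w
    · rw [V_agent (DV.x v w) hu, gadgetVal_x_of_mem hu hm, ← V_y' hu]
      simp [gadgetPolicy, hm, rD]
    · rw [V_agent (DV.x v w) hu, gadgetVal_x_of_notMem hu hm, ← V_base hu.1.isBVertex_left]
      simp [gadgetPolicy, hm, rD]
  · rw [V_y' hu, gadgetVal_y hu]
  · rw [V_z hu, gadgetVal_z hu]

lemma DVal_gadgetPolicy (hp : ∀ v, IsBVertex n v → v ≠ BV.s → 0 < p v) (hσ : IsProper n σ)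
    (hM : ∀ v, M v (σ v)) : DVal n p (gadgetPolicy σ M) = gadgetVal n p σ M := by
  have hex : ∃! V : DV → ℚ, IsDVal n p (gadgetPolicy σ M) V ∧ ∀ u, ¬ IsDVertex n u → V u = 0 :=
    ⟨gadgetVal n p σ M, ⟨isDVal_gadgetVal hσ hM, fun u hu => if_neg hu⟩,
      fun V hV => hV.1.eq_gadgetVal hp hσ hM hV.2⟩
  rw [DVal, dif_pos hex]
  have hV := hex.exists.choose_spec
  exact hV.1.eq_gadgetVal hp hσ hM hV.2

lemma dImproving_gadgetPolicy_iff (hp : ∀ v, IsBVertex n v → v ≠ BV.s → 0 < p v)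
    (hσ : IsProper n σ) (hM : ∀ v, M v (σ v)) {u u' : DV} :
    DImproving n p (gadgetPolicy σ M) u u' ↔ ∃ v w, DEdgePair n v w ∧
      (u = DV.base v ∧ u' = DV.x v w ∧ M v w ∧ 0 < zB n σ v w ∨
       u = DV.x v w ∧ u' = DV.base v ∧ M v w ∧ zB n σ v w < 0 ∨
       u = DV.x v w ∧ u' = DV.y v w ∧ ¬ M v w ∧ 0 < zB n σ v w) := by
  rw [DImproving, zD, DVal_gadgetPolicy hp hσ hM]
  constructor
  · rintro ⟨⟨v, w, he, h⟩ | ⟨rfl, rfl⟩, hz⟩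
    · have hpv := hp v he.1.isBVertex_left he.2
      refine ⟨v, w, he, ?_⟩
      rcases h with ⟨rfl, rfl⟩ | ⟨rfl, rfl⟩ | ⟨rfl, rfl⟩ | ⟨rfl, rfl⟩ <;> by_cases hm : M v w <;>
        simp_all [rD, gadgetVal_base he.1.isBVertex_left, gadgetVal_base he.1.isBVertex_right,
          gadgetVal_x_of_mem he, gadgetVal_x_of_notMem he, gadgetVal_y he, gadgetVal_z he,
          mul_neg_iff, hpv.not_gt]
    · simp [rD] at hz
  · rintro ⟨v, w, he, h⟩
    have hpv := hp v he.1.isBVertex_left he.2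
    rcases h with ⟨rfl, rfl, hm, hz⟩ | ⟨rfl, rfl, hm, hz⟩ | ⟨rfl, rfl, hm, hz⟩ <;>
      refine ⟨Or.inl ⟨v, w, he, by simp⟩, ?_⟩ <;>
      simp [rD, gadgetVal_base he.1.isBVertex_left, gadgetVal_x_of_mem he, hm, gadgetVal_y he,
        gadgetVal_x_of_notMem he, hpv, hz, mul_neg_of_pos_of_neg]

end GadgetVal

section Numbering

variable {n : ℕ} {u v u' v' : BV}

lemma NB_travel (n i : ℕ) : NB n BV.t (BV.a i) = i := rfl

lemma NB_enter (n i j : ℕ) : NB n (BV.a i) (BV.b j) = n + 1 + 5 * (i - 1) := rfl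

lemma NB_board (n i : ℕ) : NB n (BV.a i) BV.t = n + 3 + 5 * (i - 1) := rfl

lemma NB_d (n : ℕ) : NB n BV.d BV.s = 6 * n + 1 := rfl

lemma NB_s (n : ℕ) : NB n BV.s BV.s = 6 * n + 2 := rfl

lemma NB_skip (n i j : ℕ) : NB n (BV.a i) (aN n j) = n + 2 + 5 * (i - 1) := by
  unfold aN; split_ifs <;> rfl

lemma NB_stay (n i j : ℕ) : NB n (BV.b i) (bN n j) = n + 4 + 5 * (i - 1) := by
  unfold bN; split_ifs <;> rfl

lemma NB_leave (n i j : ℕ) : NB n (BV.b i) (aN n j) = n + 5 + 5 * (i - 1) := by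
  unfold aN; split_ifs <;> rfl

lemma BEdge.eq_of_NB_eq (h : BEdge n u v) (h' : BEdge n u' v') (heq : NB n u v = NB n u' v') :
    u = u' ∧ v = v' := by
  cases h using BEdge.cases_on <;> cases h' using BEdge.cases_on <;>
  simp only [NB_travel, NB_enter, NB_skip, NB_board, NB_stay, NB_leave, NB_d, NB_s] at heq <;>
  grind

end Numbering

section Simulation

variable {n : ℕ} {p : BV → ℚ} {N : DV → DV → ℕ} {π π' : BV → BV} {u w : BV}

lemma IsBlandStepD.rightUnique (hN : IsDBlandNumbering n N) :
    Relator.RightUnique (IsBlandStepD n p N) := by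
  rintro ρ ρ₁ ρ₂ ⟨u₁, v₁, hi₁, hmin₁, rfl⟩ ⟨u₂, v₂, hi₂, hmin₂, rfl⟩
  obtain ⟨rfl, rfl⟩ :=
    hN.1 u₁ v₁ u₂ v₂ hi₁.1 hi₂.1 ((hmin₁ _ _ hi₂).antisymm (hmin₂ _ _ hi₁))
  rfl

/-- `(u, w)` is the improving switch for `π` with the smallest number under `𝒩_{𝔅_n}`. -/
def IsBlandSwitch (n : ℕ) (π : BV → BV) (u w : BV) : Prop :=
  BImproving n π u w ∧ ∀ u' w', BImproving n π u' w' → NB n u w ≤ NB n u' w'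

lemma IsBlandSwitch.blandStep (h : IsBlandSwitch n π u w) :
    IsBlandStep n (NB n) π (update π u w) :=
  ⟨u, w, h.1, h.2, rfl⟩

lemma IsBlandSwitch.eq_or_lt (h : IsBlandSwitch n π u w) {u' w' : BV}
    (h' : BImproving n π u' w') : u = u' ∧ w = w' ∨ NB n u w < NB n u' w' :=
  (h.2 u' w' h').eq_or_lt.imp_left (h.1.1.eq_of_NB_eq h'.1)

lemma IsProper.not_zB_pos_apply (hπ : IsProper n π) {v : BV} (hv : IsBVertex n v) :
    ¬ 0 < zB n π v (π v) := (hπ.zB_apply hv).not_gt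

lemma blandStepD_twin (hp : ∀ v, IsBVertex n v → v ≠ BV.s → 0 < p v)
    (hN : IsDBlandNumbering n N) (hπ : IsProper n π) (h : IsBlandSwitch n π u w) :
    IsBlandStepD n p N (twin π)
      (gadgetPolicy π (fun v v' => v' = π v ∨ v' = update π u w v)) := by
  obtain ⟨-, -, hxy_lt, hblock, -⟩ := hN
  have he : DEdgePair n u w := ⟨h.1.1, h.1.ne_s⟩
  have himp := fun a b => dImproving_gadgetPolicy_iff hp hπ (M := fun v v' => v' = π v)
    (fun _ => rfl) (u := a) (u' := b)
  refine ⟨DV.x u w, DV.y u w, ?_, fun a b hab => ?_, ?_⟩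
  · rw [twin_eq_gadgetPolicy, himp]
    refine ⟨u, w, he, Or.inr (Or.inr ⟨rfl, rfl, ?_, h.1.2⟩)⟩
    rintro rfl
    exact hπ.not_zB_pos_apply he.1.isBVertex_left h.1.2
  · rw [twin_eq_gadgetPolicy, himp] at hab
    obtain ⟨v, v', he', ⟨rfl, rfl, rfl, hz⟩ | ⟨rfl, rfl, rfl, hz⟩ | ⟨rfl, rfl, -, hz⟩⟩ := hab
    · exact absurd hz (hπ.not_zB_pos_apply he'.1.isBVertex_left)
    · exact absurd (hπ.zB_apply he'.1.isBVertex_left) hz.ne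
    · rcases h.eq_or_lt ⟨he'.1, hz⟩ with ⟨rfl, rfl⟩ | hlt
      · exact le_rfl
      · exact ((hxy_lt u w he).trans (hblock u w v v' he he' hlt)).le
  · funext x
    cases x <;> simp only [update_apply, twin, gadgetPolicy] <;> grind

lemma blandStepD_base (hp : ∀ v, IsBVertex n v → v ≠ BV.s → 0 < p v)
    (hN : IsDBlandNumbering n N) (hπ : IsProper n π) (h : IsBlandSwitch n π u w) :
    IsBlandStepD n p N (gadgetPolicy π (fun v v' => v' = π v ∨ v' = update π u w v))
      (gadgetPolicy (update π u w) (fun v v' => v' = π v ∨ v' = update π u w v)) := by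
  obtain ⟨-, -, -, hblock, -⟩ := hN
  have he : DEdgePair n u w := ⟨h.1.1, h.1.ne_s⟩
  have himp := fun a b => dImproving_gadgetPolicy_iff hp hπ
    (M := fun v v' => v' = π v ∨ v' = update π u w v) (fun _ => Or.inl rfl) (u := a) (u' := b)
  have mem_cases {v v' : BV} (hz : zB n π v v' ≠ 0) (hv : IsBVertex n v)
      (hM : v' = π v ∨ v' = update π u w v) : v = u ∧ v' = w := by
    have hne : v' ≠ π v := by rintro rfl; exact hz (hπ.zB_apply hv)
    have hv' := hM.resolve_left hne
    by_cases hvu : v = u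
    · subst hvu
      exact ⟨rfl, hv'.trans (update_self ..)⟩
    · exact absurd (hv'.trans (update_of_ne hvu ..)) hne
  refine ⟨DV.base u, DV.x u w, ?_, fun a b hab => ?_, ?_⟩
  · rw [himp]
    exact ⟨u, w, he, Or.inl ⟨rfl, rfl, Or.inr (update_self u w π).symm, h.1.2⟩⟩
  · rw [himp] at hab
    obtain ⟨v, v', he', ⟨rfl, rfl, hM, hz⟩ | ⟨rfl, rfl, hM, hz⟩ | ⟨rfl, rfl, hM, hz⟩⟩ := hab
    · obtain ⟨rfl, rfl⟩ := mem_cases hz.ne' he'.1.isBVertex_left hM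
      exact le_rfl
    · obtain ⟨rfl, rfl⟩ := mem_cases hz.ne he'.1.isBVertex_left hM
      exact absurd hz h.1.2.not_gt
    · rcases h.eq_or_lt ⟨he'.1, hz⟩ with ⟨rfl, rfl⟩ | hlt
      · exact absurd (Or.inr (update_self u w π).symm) hM
      · exact (hblock u w v v' he he' hlt).le
  · funext x
    have := he.2
    cases x <;> simp only [update_apply, gadgetPolicy] <;> grind

lemma blandStepD_close (hp : ∀ v, IsBVertex n v → v ≠ BV.s → 0 < p v)
    (hN : IsDBlandNumbering n N) (hπ : IsProper n π) (h : IsBlandSwitch n π u w) :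
    IsBlandStepD n p N
      (gadgetPolicy (update π u w) (fun v v' => v' = π v ∨ v' = update π u w v))
      (twin (update π u w)) := by
  obtain ⟨-, hclose, hxy_lt, -, -⟩ := hN
  have hu := h.1.1.isBVertex_left
  have he : DEdgePair n u (π u) := ⟨hπ.isBPolicy u hu, h.1.ne_s⟩
  have hne : w ≠ π u := by rintro rfl; exact hπ.not_zB_pos_apply hu h.1.2
  have hπ' := hπ.update h.1
  have himp := fun a b => dImproving_gadgetPolicy_iff hp hπ'
    (M := fun v v' => v' = π v ∨ v' = update π u w v) (fun _ => Or.inr rfl) (u := a) (u' := b)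
  refine ⟨DV.x u (π u), DV.base u, ?_, fun a b hab => ?_, ?_⟩
  · rw [himp]
    refine ⟨u, π u, he, Or.inr (Or.inl ⟨rfl, rfl, Or.inl rfl, ?_⟩)⟩
    rw [zB_update_apply hπ h.1, neg_lt_zero]
    exact h.1.2
  · rw [himp] at hab
    obtain ⟨v, v', he', ⟨rfl, rfl, -, -⟩ | ⟨rfl, rfl, hM, hz⟩ | ⟨rfl, rfl, -, -⟩⟩ := hab
    · exact ((hclose u (π u) v v' he he').trans (hxy_lt v v' he')).le
    · have hv' : v' ≠ update π u w v := by
        rintro rfl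
        exact hz.ne (hπ'.zB_apply he'.1.isBVertex_left)
      obtain rfl := hM.resolve_right hv'
      obtain rfl : v = u := by
        by_contra hvu
        exact hv' (update_of_ne hvu ..).symm
      exact le_rfl
    · exact (hclose u (π u) v v' he he').le
  · funext x
    cases x <;> simp only [update_apply, gadgetPolicy, twin] <;> grind

/- The three switches enter the gadget of the new edge, redirect the vertex to it, and close the
gadget of the old edge. -/
lemma stepsAtLeast_twin_of_blandStep (hp : ∀ v, IsBVertex n v → v ≠ BV.s → 0 < p v)
    (hN : IsDBlandNumbering n N) (hπ : IsProper n π) (h : IsBlandStep n (NB n) π π') :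
    StepsAtLeast (IsBlandStepD n p N) (twin π) 3 (twin π') := by
  obtain ⟨u, w, hi, hmin, rfl⟩ := h
  have h : IsBlandSwitch n π u w := ⟨hi, hmin⟩
  exact ((StepsAtLeast.single (blandStepD_twin hp hN hπ h)).trans
    (.single (blandStepD_base hp hN hπ h))).trans (.single (blandStepD_close hp hN hπ h))

end Simulation

/-! ### Bland's choice at a level -/

section Levels

variable {n i k : ℕ} {π : BV → BV} {u v v' w : BV}

namespace IsProper

lemma BVal_t_of_travel (h : IsProper n π) (ht : π .t = .a k) : BVal n π .t = BVal n π (.a k) := by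
  rw [h.BVal_eq (v := .t) trivial nofun, ht]
  exact zero_add _

lemma BVal_a_of_enter (h : IsProper n π) (ha : π (.a k) = .b k) (h1 : 1 ≤ k := by omega)
    (h2 : k ≤ n := by omega) : BVal n π (.a k) = 2 ^ k + BVal n π (.b k) := by
  rw [h.BVal_eq (v := .a k) ⟨h1, h2⟩ nofun, ha, rB_enter]

lemma BVal_a_of_skip (h : IsProper n π) (ha : π (.a k) = .a (k + 1)) (h1 : 1 ≤ k := by omega)
    (h2 : k ≤ n := by omega) : BVal n π (.a k) = BVal n π (.a (k + 1)) := by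
  rw [h.BVal_eq (v := .a k) ⟨h1, h2⟩ nofun, ha]
  exact zero_add _

lemma BVal_a_of_board (h : IsProper n π) (ha : π (.a k) = .t) (h1 : 1 ≤ k := by omega)
    (h2 : k ≤ n := by omega) : BVal n π (.a k) = BVal n π .t - 2 ^ k + 5 / 4 := by
  rw [h.BVal_eq (v := .a k) ⟨h1, h2⟩ nofun, ha]
  simp only [rB]
  ring

lemma BVal_b_of_stay (h : IsProper n π) (hb : π (.b k) = .b (k + 1)) (h1 : 1 ≤ k := by omega)
    (h2 : k ≤ n := by omega) : BVal n π (.b k) = 3 / 4 + BVal n π (.b (k + 1)) := by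
  rw [h.BVal_eq (v := .b k) ⟨h1, h2⟩ nofun, hb]
  simp only [rB, if_true]

lemma BVal_b_of_leave (h : IsProper n π) (hb : π (.b k) = .a (k + 1)) (h1 : 1 ≤ k := by omega)
    (h2 : k ≤ n := by omega) : BVal n π (.b k) = BVal n π (.a (k + 1)) := by
  rw [h.BVal_eq (v := .b k) ⟨h1, h2⟩ nofun, hb]
  exact zero_add _

end IsProper

/-- No edge of level `k < n` is an improving switch for `π`. -/
structure LevelOptimal (n : ℕ) (π : BV → BV) (k : ℕ) : Prop where
  enter : 2 ^ k + BVal n π (.b k) ≤ BVal n π (.a k)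
  skip : BVal n π (.a (k + 1)) ≤ BVal n π (.a k)
  board : BVal n π .t - 2 ^ k + 5 / 4 ≤ BVal n π (.a k)
  stay : 3 / 4 + BVal n π (.b (k + 1)) ≤ BVal n π (.b k)
  leave : BVal n π (.a (k + 1)) ≤ BVal n π (.b k)

/-- No travel edge and no edge of a level below `i` is an improving switch for `π`, so that Bland's
rule looks at level `i` first. -/
structure OptimalBelow (n i : ℕ) (π : BV → BV) : Prop where
  travel : ∀ k, 1 ≤ k → k ≤ n → BVal n π (.a k) ≤ BVal n π .t
  level : ∀ k, 1 ≤ k → k < i → LevelOptimal n π k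

lemma OptimalBelow.succ (h : OptimalBelow n i π) (hi : LevelOptimal n π i) :
    OptimalBelow n (i + 1) π where
  travel := h.travel
  level k h1 hk := (Nat.lt_succ_iff_lt_or_eq.1 hk).elim (h.level k h1) (· ▸ hi)

lemma OptimalBelow.lt_NB (h : OptimalBelow n i π) (hin : i ≤ n) (hu : BImproving n π u w) :
    n + 5 * (i - 1) < NB n u w := by
  obtain ⟨he, hz⟩ := hu
  cases he using BEdge.cases_on
  case travel k h1 h2 _ =>
    have := h.travel k h1 h2
    simp only [zB, rB] at hz
    linarith
  case d | s =>
    simp only [NB_d, NB_s]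
    omega
  case enter k h1 _ _ | skip k h1 _ _ | board k h1 _ _ | stay k h1 _ _ | leave k h1 _ _ =>
    rcases lt_or_ge k i with hki | hki
    · obtain ⟨henter, hskip, hboard, hstay, hleave⟩ := h.level k h1 hki
      simp only [zB, rB, aN_of_le (hki.trans_le hin), bN_of_le (hki.trans_le hin), if_true] at hz
      linarith
    · simp only [NB_enter, NB_skip, NB_board, NB_stay, NB_leave]
      omega

lemma BImproving.lt_NB_of_zB_nonpos (h : BImproving n π u w) (he : BEdge n v v')
    (hz : zB n π v v' ≤ 0) (hle : NB n v v' ≤ NB n u w) : NB n v v' < NB n u w := by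
  refine hle.lt_of_ne fun heq => ?_
  obtain ⟨rfl, rfl⟩ := he.eq_of_NB_eq h.1 heq
  exact hz.not_gt h.2

lemma OptimalBelow.lt_NB_of_enter (h : OptimalBelow n i π) (h1 : 1 ≤ i) (hin : i ≤ n)
    (henter : 2 ^ i + BVal n π (.b i) ≤ BVal n π (.a i)) (hu : BImproving n π u w) :
    n + 1 + 5 * (i - 1) < NB n u w := by
  refine hu.lt_NB_of_zB_nonpos (bEdge_a_iff.2 ⟨⟨h1, hin⟩, .inl rfl⟩) ?_ ?_
  · simpa only [zB, rB_enter, sub_nonpos] using henter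
  · rw [NB_enter]
    linarith [h.lt_NB hin hu]

lemma OptimalBelow.lt_NB_of_skip (h : OptimalBelow n i π) (h1 : 1 ≤ i) (hin : i < n)
    (henter : 2 ^ i + BVal n π (.b i) ≤ BVal n π (.a i))
    (hskip : BVal n π (.a (i + 1)) ≤ BVal n π (.a i)) (hu : BImproving n π u w) :
    n + 2 + 5 * (i - 1) < NB n u w := by
  rw [← NB_skip n i (i + 1)]
  refine hu.lt_NB_of_zB_nonpos (bEdge_a_iff.2 ⟨⟨h1, hin.le⟩, .inr (.inl rfl)⟩) ?_ ?_
  · rwa [zB, rB_skip, aN_of_le hin, zero_add, sub_nonpos]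
  · rw [NB_skip]
    linarith [h.lt_NB_of_enter h1 hin.le henter hu]

lemma OptimalBelow.lt_NB_of_board (h : OptimalBelow n i π) (h1 : 1 ≤ i) (hin : i < n)
    (henter : 2 ^ i + BVal n π (.b i) ≤ BVal n π (.a i))
    (hskip : BVal n π (.a (i + 1)) ≤ BVal n π (.a i))
    (hboard : BVal n π .t - 2 ^ i + 5 / 4 ≤ BVal n π (.a i)) (hu : BImproving n π u w) :
    n + 3 + 5 * (i - 1) < NB n u w := by
  refine hu.lt_NB_of_zB_nonpos (bEdge_a_iff.2 ⟨⟨h1, hin.le⟩, .inr (.inr rfl)⟩) ?_ ?_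
  · simp only [zB, rB]
    linarith
  · rw [NB_board]
    linarith [h.lt_NB_of_skip h1 hin henter hskip hu]

lemma OptimalBelow.lt_NB_of_stay (h : OptimalBelow n i π) (h1 : 1 ≤ i) (hin : i < n)
    (henter : 2 ^ i + BVal n π (.b i) ≤ BVal n π (.a i))
    (hskip : BVal n π (.a (i + 1)) ≤ BVal n π (.a i))
    (hboard : BVal n π .t - 2 ^ i + 5 / 4 ≤ BVal n π (.a i))
    (hstay : 3 / 4 + BVal n π (.b (i + 1)) ≤ BVal n π (.b i)) (hu : BImproving n π u w) :
    n + 4 + 5 * (i - 1) < NB n u w := by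
  rw [← NB_stay n i (i + 1)]
  refine hu.lt_NB_of_zB_nonpos (bEdge_b_iff.2 ⟨⟨h1, hin.le⟩, .inl rfl⟩) ?_ ?_
  · rwa [zB, rB_stay, bN_of_le hin, sub_nonpos]
  · rw [NB_stay]
    linarith [h.lt_NB_of_board h1 hin henter hskip hboard hu]

lemma isBlandSwitch_travel (h1 : 1 ≤ i) (h2 : i ≤ n)
    (hbelow : ∀ k, 1 ≤ k → k < i → BVal n π (.a k) ≤ BVal n π .t)
    (hi : BVal n π .t < BVal n π (.a i)) : IsBlandSwitch n π .t (.a i) := by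
  refine ⟨⟨bEdge_t_iff.2 ⟨i, h1, h2, rfl⟩, ?_⟩, ?_⟩
  · simpa only [zB, rB, zero_add, sub_pos] using hi
  rintro u w ⟨he, hz⟩
  cases he using BEdge.cases_on
  case travel k h3 _ _ =>
    by_contra! hki
    have := hbelow k h3 hki
    simp only [zB, rB] at hz
    linarith
  all_goals
    simp only [NB_travel, NB_enter, NB_skip, NB_board, NB_stay, NB_leave, NB_d, NB_s]
    omega

lemma isBlandSwitch_enter (h : OptimalBelow n i π) (h1 : 1 ≤ i) (hin : i ≤ n)
    (henter : BVal n π (.a i) < 2 ^ i + BVal n π (.b i)) :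
    IsBlandSwitch n π (.a i) (.b i) := by
  refine ⟨⟨bEdge_a_iff.2 ⟨⟨h1, hin⟩, .inl rfl⟩, ?_⟩, fun u w hu => ?_⟩
  · rwa [zB, rB_enter, sub_pos]
  · rw [NB_enter]
    linarith [h.lt_NB hin hu]

lemma isBlandSwitch_skip (h : OptimalBelow n i π) (h1 : 1 ≤ i) (hin : i < n)
    (henter : 2 ^ i + BVal n π (.b i) ≤ BVal n π (.a i))
    (hskip : BVal n π (.a i) < BVal n π (.a (i + 1))) :
    IsBlandSwitch n π (.a i) (.a (i + 1)) := by
  rw [← aN_of_le hin]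
  refine ⟨⟨bEdge_a_iff.2 ⟨⟨h1, hin.le⟩, .inr (.inl rfl)⟩, ?_⟩, fun u w hu => ?_⟩
  · rwa [zB, rB_skip, aN_of_le hin, zero_add, sub_pos]
  · rw [NB_skip]
    linarith [h.lt_NB_of_enter h1 hin.le henter hu]

lemma isBlandSwitch_board (h : OptimalBelow n i π) (h1 : 1 ≤ i) (hin : i < n)
    (henter : 2 ^ i + BVal n π (.b i) ≤ BVal n π (.a i))
    (hskip : BVal n π (.a (i + 1)) ≤ BVal n π (.a i))
    (hboard : BVal n π (.a i) < BVal n π .t - 2 ^ i + 5 / 4) :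
    IsBlandSwitch n π (.a i) .t := by
  refine ⟨⟨bEdge_a_iff.2 ⟨⟨h1, hin.le⟩, .inr (.inr rfl)⟩, ?_⟩, fun u w hu => ?_⟩
  · simp only [zB, rB]
    linarith
  · rw [NB_board]
    linarith [h.lt_NB_of_skip h1 hin henter hskip hu]

lemma isBlandSwitch_stay (h : OptimalBelow n i π) (h1 : 1 ≤ i) (hin : i < n)
    (henter : 2 ^ i + BVal n π (.b i) ≤ BVal n π (.a i))
    (hskip : BVal n π (.a (i + 1)) ≤ BVal n π (.a i))
    (hboard : BVal n π .t - 2 ^ i + 5 / 4 ≤ BVal n π (.a i))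
    (hstay : BVal n π (.b i) < 3 / 4 + BVal n π (.b (i + 1))) :
    IsBlandSwitch n π (.b i) (.b (i + 1)) := by
  rw [← bN_of_le hin]
  refine ⟨⟨bEdge_b_iff.2 ⟨⟨h1, hin.le⟩, .inl rfl⟩, ?_⟩, fun u w hu => ?_⟩
  · rwa [zB, rB_stay, bN_of_le hin, sub_pos]
  · rw [NB_stay]
    linarith [h.lt_NB_of_board h1 hin henter hskip hboard hu]

lemma isBlandSwitch_leave (h : OptimalBelow n i π) (h1 : 1 ≤ i) (hin : i < n)
    (henter : 2 ^ i + BVal n π (.b i) ≤ BVal n π (.a i))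
    (hskip : BVal n π (.a (i + 1)) ≤ BVal n π (.a i))
    (hboard : BVal n π .t - 2 ^ i + 5 / 4 ≤ BVal n π (.a i))
    (hstay : 3 / 4 + BVal n π (.b (i + 1)) ≤ BVal n π (.b i))
    (hleave : BVal n π (.b i) < BVal n π (.a (i + 1))) :
    IsBlandSwitch n π (.b i) (.a (i + 1)) := by
  rw [← aN_of_le hin]
  refine ⟨⟨bEdge_b_iff.2 ⟨⟨h1, hin.le⟩, .inr rfl⟩, ?_⟩, fun u w hu => ?_⟩
  · rwa [zB, rB_leave, aN_of_le hin, zero_add, sub_pos]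
  · rw [NB_leave]
    linarith [h.lt_NB_of_stay h1 hin henter hskip hboard hstay hu]

end Levels

/-! ### Runs of Bland's rule that leave the upper levels unchanged -/

section Frame

variable {n i j k : ℕ} {π π' : BV → BV} {u v w : BV} {X Y : ℚ}

/-- The vertices of the levels above `j`, together with the two terminal vertices `d` and `s`. -/
def above (j : ℕ) : Set BV := fun v =>
  match v with
  | .t => False
  | .a k => j < k
  | .b k => j < k
  | _ => True

lemma above_antitone : Antitone above := by
  rintro i j hij (_ | _ | _ | k | k) hk
  all_goals first | exact hk | exact lt_of_le_of_lt hij hk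

lemma t_notMem_above (j : ℕ) : .t ∉ above j := not_false

lemma a_notMem_above (h : k ≤ j) : .a k ∉ above j := h.not_gt

lemma b_notMem_above (h : k ≤ j) : .b k ∉ above j := h.not_gt

/-- The path that `π` takes from `v` avoids the vertex `t`. -/
def AvoidsTravel (π : BV → BV) (v : BV) : Prop := ∀ k, π^[k] v ≠ .t

lemma AvoidsTravel.apply (h : AvoidsTravel π v) : AvoidsTravel π (π v) := fun k => h (k + 1)

lemma AvoidsTravel.of_apply (hv : v ≠ .t) (h : AvoidsTravel π (π v)) : AvoidsTravel π v
  | 0 => hv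
  | k + 1 => h k

lemma IsProper.avoidsTravel_s (h : IsProper n π) : AvoidsTravel π .s := fun k => by
  rw [iterate_fixed h.apply_s]
  exact nofun

lemma IsProper.apply_mem_above (h : IsProper n π) (hv : IsBVertex n v) (hj : v ∈ above j)
    (ht : π v ≠ .t) : π v ∈ above j := by
  have he := h.isBPolicy v hv
  rcases v with _ | _ | _ | k | k
  · exact hj.elim
  · rw [bEdge_s_iff.1 he]; trivial
  · rw [bEdge_d_iff.1 he]; trivial
  · have hk : j < k := hj
    rcases (bEdge_a_iff.1 he).2 with he | he | he
    · rw [he]; exact hk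
    · simp only [he, aN]
      split_ifs
      · trivial
      · exact hk.trans k.lt_succ_self
    · exact absurd he ht
  · have hk : j < k := hj
    rcases (bEdge_b_iff.1 he).2 with he | he
    all_goals
      simp only [he, aN, bN]
      split_ifs
      · trivial
      · exact hk.trans k.lt_succ_self

lemma IsProper.iterate_eq_of_eqOn_above (h : IsProper n π) (heq : EqOn π' π (above j))
    (hv : IsBVertex n v) (hj : v ∈ above j) (ht : AvoidsTravel π v) (k : ℕ) :
    π'^[k] v = π^[k] v := by
  have hmaps : MapsTo π {v | v ∈ above j ∧ IsBVertex n v ∧ AvoidsTravel π v}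
      {v | v ∈ above j ∧ IsBVertex n v ∧ AvoidsTravel π v} := fun v ⟨hj, hv, ht⟩ =>
    ⟨h.apply_mem_above hv hj (ht 1), h.isBVertex_apply hv, ht.apply⟩
  exact iterate_eq_of_eqOn hmaps (heq.mono fun v hv => hv.1) ⟨hj, hv, ht⟩ k

lemma IsProper.BVal_eq_of_eqOn_above (h : IsProper n π) (heq : EqOn π' π (above j))
    (hv : IsBVertex n v) (hj : v ∈ above j) (ht : AvoidsTravel π v) :
    BVal n π' v = BVal n π v :=
  BVal_congr (h.iterate_eq_of_eqOn_above heq hv hj ht)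

lemma IsProper.avoidsTravel_of_eqOn_above (h : IsProper n π) (heq : EqOn π' π (above j))
    (hv : IsBVertex n v) (hj : v ∈ above j) (ht : AvoidsTravel π v) : AvoidsTravel π' v := by
  intro k
  rw [h.iterate_eq_of_eqOn_above heq hv hj ht]
  exact ht k

lemma eqOn_update_of_notMem {α β : Type*} [DecidableEq α] {f : α → β} {s : Set α} {a : α}
    (ha : a ∉ s) (b : β) : EqOn (update f a b) f s :=
  fun _ hx => update_of_ne (by rintro rfl; exact ha hx) b f

/-- Above level `j`, every `a k` either boards or has value at most `Y` independently of the
travel edge, and the value of every `b k` is independent of the travel edge. -/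
structure CappedAbove (n j : ℕ) (Y : ℚ) (π : BV → BV) : Prop where
  avoids_b : ∀ k, j < k → k ≤ n → AvoidsTravel π (.b k)
  avoids_a : ∀ k, j < k → k ≤ n → π (.a k) ≠ .t → AvoidsTravel π (.a k)
  le : ∀ k, j < k → k ≤ n → π (.a k) ≠ .t → BVal n π (.a k) ≤ Y

namespace CappedAbove

lemma mono (h : CappedAbove n j X π) (hXY : X ≤ Y) : CappedAbove n j Y π :=
  { h with le := fun k hj hk ht => (h.le k hj hk ht).trans hXY }

lemma congr (h : CappedAbove n j Y π) (hπ : IsProper n π) (heq : EqOn π' π (above j)) :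
    CappedAbove n j Y π' where
  avoids_b k hj hk := hπ.avoidsTravel_of_eqOn_above heq (v := .b k) ⟨by omega, hk⟩ hj
    (h.avoids_b k hj hk)
  avoids_a k hj hk ht := hπ.avoidsTravel_of_eqOn_above heq (v := .a k) ⟨by omega, hk⟩ hj
    (h.avoids_a k hj hk (heq (x := .a k) hj ▸ ht))
  le k hj hk ht := by
    rw [heq (x := .a k) hj] at ht
    rw [hπ.BVal_eq_of_eqOn_above heq (v := .a k) ⟨by omega, hk⟩ hj (h.avoids_a k hj hk ht)]
    exact h.le k hj hk ht

lemma of_succ (h : CappedAbove n (j + 1) Y π) (hb : AvoidsTravel π (.b (j + 1)))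
    (ha : π (.a (j + 1)) ≠ .t →
      AvoidsTravel π (.a (j + 1)) ∧ BVal n π (.a (j + 1)) ≤ Y) : CappedAbove n j Y π where
  avoids_b k hj hk := (Nat.succ_le_of_lt hj).eq_or_lt.elim (· ▸ hb) (h.avoids_b k · hk)
  avoids_a k hj hk := by
    rcases (Nat.succ_le_of_lt hj).eq_or_lt with rfl | hj
    · exact fun ht => (ha ht).1
    · exact h.avoids_a k hj hk
  le k hj hk := by
    rcases (Nat.succ_le_of_lt hj).eq_or_lt with rfl | hj
    · exact fun ht => (ha ht).2
    · exact h.le k hj hk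

lemma anti (h : CappedAbove n i Y π) (hij : i ≤ j) : CappedAbove n j Y π where
  avoids_b k hj := h.avoids_b k (hij.trans_lt hj)
  avoids_a k hj := h.avoids_a k (hij.trans_lt hj)
  le k hj := h.le k (hij.trans_lt hj)

lemma BVal_a_le_t (h : CappedAbove n j Y π) (hπ : IsProper n π) (hY : Y ≤ BVal n π .t)
    (hj : j < k) (hk : k ≤ n) : BVal n π (.a k) ≤ BVal n π .t := by
  by_cases ht : π (.a k) = .t
  · linarith [hπ.BVal_a_of_board ht, two_le_two_pow (show 1 ≤ k by omega)]
  · exact (h.le k hj hk ht).trans hY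

end CappedAbove

/-- A run of Bland's rule of at least `c` steps that changes `π` only at `t` and at levels up to
`j`. -/
structure BlandRun (n j c : ℕ) (π π' : BV → BV) : Prop where
  steps : StepsAtLeast (IsBlandStep n (NB n)) π c π'
  isProper : IsProper n π'
  eqOn : EqOn π' π (above j)

namespace BlandRun

variable {c c' : ℕ} {π'' : BV → BV}

lemma refl (hπ : IsProper n π) : BlandRun n j 0 π π := ⟨.zero, hπ, fun _ _ => rfl⟩

lemma trans (h : BlandRun n j c π π') (h' : BlandRun n j c' π' π'') :
    BlandRun n j (c + c') π π'' :=
  ⟨h.steps.trans h'.steps, h'.isProper, h'.eqOn.trans h.eqOn⟩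

lemma mono (h : BlandRun n i c π π') (hij : i ≤ j) (hc : c' ≤ c) : BlandRun n j c' π π' :=
  ⟨h.steps.mono hc, h.isProper, h.eqOn.mono (above_antitone hij)⟩

end BlandRun

lemma IsBlandSwitch.blandRun (hsw : IsBlandSwitch n π u w) (hπ : IsProper n π)
    (hu : u ∉ above j) : BlandRun n j 1 π (update π u w) :=
  ⟨.single hsw.blandStep, hπ.update hsw.1, eqOn_update_of_notMem hu w⟩

lemma IsBlandSwitch.BVal_update_target (hsw : IsBlandSwitch n π u w) (hπ : IsProper n π) :
    BVal n (update π u w) w = BVal n π w :=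
  BVal_congr (iterate_update_of_improving hπ hsw.1)

end Frame

/-! ### Filling a block of levels -/

section Filled

variable {n i j k l m : ℕ} {π π' : BV → BV} {u w : BV} {X Y : ℚ}

/-- The levels `l, …, m` contain consecutive set bits: `a k` enters, and `b k` leaves for the next
level of the block. -/
structure Filled (l m : ℕ) (π : BV → BV) : Prop where
  enter : ∀ k, l ≤ k → k ≤ m → π (.a k) = .b k
  leave : ∀ k, l ≤ k → k < m → π (.b k) = .a (k + 1)

namespace Filled

lemma BVal_a (h : Filled l m π) (hπ : IsProper n π) (hl : 1 ≤ l) (hm : m ≤ n) (hlk : l ≤ k)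
    (hkm : k ≤ m) : BVal n π (.a k) = BVal n π (.b m) + 2 ^ (m + 1) - 2 ^ k := by
  induction hkm using Nat.decreasingInduction with
  | self =>
    rw [hπ.BVal_a_of_enter (h.enter m hlk le_rfl), pow_succ]
    ring
  | of_succ k hk ih =>
    rw [hπ.BVal_a_of_enter (h.enter k hlk hk.le), hπ.BVal_b_of_leave (h.leave k hlk hk),
      ih (by omega), pow_succ]
    ring

lemma BVal_t (h : Filled 1 i π) (hπ : IsProper n π) (ht : π .t = .a 1) (h1 : 1 ≤ i)
    (hin : i ≤ n) : BVal n π .t = BVal n π (.b i) + 2 ^ (i + 1) - 2 := by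
  rw [hπ.BVal_t_of_travel ht, h.BVal_a hπ le_rfl hin le_rfl h1, pow_one]

lemma levelOptimal (h : Filled 1 i π) (hπ : IsProper n π) (ht : π .t = .a 1) (h1 : 1 ≤ i)
    (hin : i ≤ n) (hskip : BVal n π (.a (i + 1)) ≤ BVal n π (.b i))
    (hstay : 3 / 4 + BVal n π (.b (i + 1)) ≤ BVal n π (.b i)) : LevelOptimal n π i := by
  have val_t := h.BVal_t hπ ht h1 hin
  have val_a := hπ.BVal_a_of_enter (h.enter i h1 le_rfl)
  have hpow := two_le_two_pow h1
  rw [pow_succ] at val_t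
  constructor <;> linarith

lemma mono (h : Filled l m π) (hkm : k ≤ m) : Filled l k π :=
  ⟨fun i hl hi => h.enter i hl (hi.trans hkm), fun i hl hi => h.leave i hl (hi.trans_le hkm)⟩

lemma succ (h : Filled l m π) (hb : π (.b m) = .a (m + 1)) (ha : π (.a (m + 1)) = .b (m + 1)) :
    Filled l (m + 1) π where
  enter k hl hk := (Nat.le_succ_iff.1 hk).elim (h.enter k hl) (· ▸ ha)
  leave k hl hk := (Nat.lt_succ_iff_lt_or_eq.1 hk).elim (h.leave k hl) (· ▸ hb)

lemma update (h : Filled l m π) (ha : ∀ k ≤ m, .a k ≠ u) (hb : ∀ k < m, .b k ≠ u) (w : BV) :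
    Filled l m (update π u w) where
  enter k hl hk := (update_of_ne (ha k hk) w π).trans (h.enter k hl hk)
  leave k hl hk := (update_of_ne (hb k hk) w π).trans (h.leave k hl hk)

lemma optimalBelow (h : Filled 1 i π) (hπ : IsProper n π) (ht : π .t = .a 1) (h1 : 1 ≤ i)
    (hin : i ≤ n) (hcap : CappedAbove n i Y π) (hY : Y ≤ BVal n π .t) :
    OptimalBelow n i π where
  travel k hk1 hkn := by
    rcases le_or_gt k i with hki | hki
    · rw [h.BVal_t hπ ht h1 hin, h.BVal_a hπ le_rfl hin hk1 hki]
      linarith [two_le_two_pow hk1]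
    · exact hcap.BVal_a_le_t hπ hY hki hkn
  level k hk1 hki := by
    have val_b := hπ.BVal_b_of_leave (h.leave k hk1 hki)
    have val_a := hπ.BVal_a_of_enter (h.enter (k + 1) (by omega) hki)
    have hpow := two_le_two_pow (show 1 ≤ k + 1 by omega)
    exact (h.mono hki.le).levelOptimal hπ ht hk1 (by omega) val_b.ge (by linarith)

end Filled

/-- Level `j + 1` is entered, and its value `X` dominates the non-boarding levels above it: the
situation in which the levels up to `j` are reset. -/
structure Settled (n j : ℕ) (X : ℚ) (π : BV → BV) : Prop extends IsProper n π where
  lt : j < n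
  enter_succ : π (.a (j + 1)) = .b (j + 1)
  val_succ : BVal n π (.a (j + 1)) = X
  cappedAbove : CappedAbove n j X π

namespace Settled

lemma BVal_b (h : Settled n j X π) : BVal n π (.b (j + 1)) = X - 2 ^ (j + 1) := by
  rw [← h.val_succ, h.BVal_a_of_enter h.enter_succ (by omega) h.lt]
  ring

lemma avoidsTravel_a (h : Settled n j X π) : AvoidsTravel π (.a (j + 1)) :=
  h.cappedAbove.avoids_a _ j.lt_succ_self h.lt (h.enter_succ ▸ nofun)

lemma congr (h : Settled n j X π) (hπ' : IsProper n π') (heq : EqOn π' π (above j)) :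
    Settled n j X π' where
  toIsProper := hπ'
  lt := h.lt
  enter_succ := (heq (x := .a (j + 1)) j.lt_succ_self).trans h.enter_succ
  val_succ := by
    rw [h.BVal_eq_of_eqOn_above heq (v := .a (j + 1)) ⟨by omega, h.lt⟩ j.lt_succ_self
      h.avoidsTravel_a, h.val_succ]
  cappedAbove := h.cappedAbove.congr h.toIsProper heq

lemma update (h : Settled n j X π) (hsw : IsBlandSwitch n π u w) (hu : u ∉ above j) :
    Settled n j X (update π u w) :=
  h.congr (h.toIsProper.update hsw.1) (eqOn_update_of_notMem hu w)

end Settled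

lemma IsBlandSwitch.settled (hsw : IsBlandSwitch n π (.a (j + 1)) (.b (j + 1)))
    (hπ : IsProper n π) (hj : j < n) (hcap : CappedAbove n j (BVal n π (.b (j + 1))) π) :
    Settled n j (2 ^ (j + 1) + BVal n π (.b (j + 1)))
      (Function.update π (.a (j + 1)) (.b (j + 1))) := by
  have hπ' := hπ.update hsw.1
  have enter : Function.update π (.a (j + 1)) (.b (j + 1)) (.a (j + 1)) = .b (j + 1) :=
    update_self ..
  have val : BVal n (Function.update π (.a (j + 1)) (.b (j + 1))) (.a (j + 1)) =
      2 ^ (j + 1) + BVal n π (.b (j + 1)) := by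
    rw [hπ'.BVal_a_of_enter enter (by omega) hj, hsw.BVal_update_target hπ]
  have avoids_b : AvoidsTravel (Function.update π (.a (j + 1)) (.b (j + 1))) (.b (j + 1)) := by
    intro k
    rw [iterate_update_of_improving hπ hsw.1]
    exact hcap.avoids_b _ j.lt_succ_self hj k
  refine ⟨hπ', hj, enter, val, .of_succ ?_ avoids_b fun _ => ⟨?_, val.le⟩⟩
  · refine ((hcap.anti j.le_succ).congr hπ
      (eqOn_update_of_notMem (a_notMem_above le_rfl) _)).mono ?_
    exact le_add_of_nonneg_left (by positivity)
  · exact .of_apply nofun (by rwa [enter])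

/-- From a settled level `j + 1` at which `t` has just arrived, Bland's rule counts through the
levels up to `j`, whose top bit stays connected to level `j + 1`, and fills them again. -/
def Recounts (n j : ℕ) : Prop :=
  ∀ π X, Settled n j X π → Filled 1 j π → π (.b j) = .b (j + 1) → π .t = .a (j + 1) →
    ∃ π', BlandRun n j (2 ^ j - 1) π π' ∧ Filled 1 j π' ∧ π' (.b j) = .a (j + 1) ∧ π' .t = .a 1

lemma exists_blandRun_of_stay (hπ : IsProper n π) (h1 : 1 ≤ i) (hin : i < n)
    (hfill : Filled 1 i π) (hb : π (.b i) = .b (i + 1)) (ht : π .t = .a 1)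
    (hcap : CappedAbove n i (BVal n π (.b (i + 1))) π) (hrec : Recounts n i) :
    ∃ π', BlandRun n (i + 1) (2 ^ i) π π' ∧ π' (.b (i + 1)) = π (.b (i + 1)) ∧
      Filled 1 (i + 1) π' ∧ π' .t = .a 1 := by
  have val_t := hfill.BVal_t hπ ht h1 hin.le
  have val_b := hπ.BVal_b_of_stay hb
  have hpow := two_le_two_pow h1
  have hpow' : (2 : ℚ) ^ (i + 1) = 2 * 2 ^ i := pow_succ' 2 i
  have val_a_succ : BVal n π (.a (i + 1)) ≤ BVal n π (.b (i + 1)) := by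
    by_cases hboard : π (.a (i + 1)) = .t
    · linarith [hπ.BVal_a_of_board hboard]
    · exact hcap.le _ i.lt_succ_self hin hboard
  have enter_next : IsBlandSwitch n π (.a (i + 1)) (.b (i + 1)) := by
    refine isBlandSwitch_enter (.succ (hfill.optimalBelow hπ ht h1 hin.le hcap (by linarith))
      (hfill.levelOptimal hπ ht h1 hin.le (by linarith) val_b.ge)) (by omega) hin (by linarith)
  have run₁ := enter_next.blandRun hπ (j := i + 1) (a_notMem_above le_rfl)
  have settled := enter_next.settled hπ hin hcap
  have filled : Filled 1 i (update π (.a (i + 1)) (.b (i + 1))) :=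
    hfill.update (by grind) (by grind) _
  set π₁ := update π (.a (i + 1)) (.b (i + 1))
  have hb₁ : π₁ (.b i) = .b (i + 1) := hb
  have travel_next : IsBlandSwitch n π₁ .t (.a (i + 1)) := by
    have val_t₁ := filled.BVal_t run₁.isProper ht h1 hin.le
    refine isBlandSwitch_travel (by omega) hin (fun k hk1 hki => ?_) ?_
    · rw [val_t₁, filled.BVal_a run₁.isProper le_rfl hin.le hk1 (by omega)]
      linarith [two_le_two_pow hk1]
    · linarith [run₁.isProper.BVal_b_of_stay hb₁,
        run₁.isProper.BVal_a_of_enter settled.enter_succ (by omega) hin]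
  have run₂ := travel_next.blandRun run₁.isProper (j := i + 1) (t_notMem_above _)
  obtain ⟨π', run₃, hfill', hb', ht'⟩ := hrec _ _ (settled.update travel_next (t_notMem_above _))
    (filled.update (by simp) (by simp) _) hb₁ (update_self ..)
  have enter' : π' (.a (i + 1)) = .b (i + 1) :=
    (run₃.eqOn (x := .a (i + 1)) i.lt_succ_self).trans settled.enter_succ
  refine ⟨π', ((run₁.trans run₂).trans (run₃.mono i.le_succ le_rfl)).mono le_rfl (by omega), ?_,
    hfill'.succ hb' enter', ht'⟩
  exact run₃.eqOn (x := .b (i + 1)) i.lt_succ_self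

lemma exists_blandRun_of_leave (hπ : IsProper n π) (h1 : 1 ≤ i) (hin : i < n)
    (hfill : Filled 1 i π) (hb : π (.b i) = .a (i + 1)) (ht : π .t = .a 1)
    (hcap : CappedAbove n i (BVal n π (.b (i + 1))) π)
    (hval : BVal n π (.a (i + 1)) = BVal n π (.b (i + 1))) (hrec : Recounts n i) :
    ∃ π', BlandRun n (i + 1) (2 ^ i) π π' ∧ π' (.b (i + 1)) = π (.b (i + 1)) ∧
      Filled 1 (i + 1) π' ∧ π' .t = .a 1 := by
  have val_t := hfill.BVal_t hπ ht h1 hin.le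
  have val_b := hπ.BVal_b_of_leave hb
  have val_a := hπ.BVal_a_of_enter (hfill.enter i h1 le_rfl)
  have hpow := two_le_two_pow h1
  have hpow' : (2 : ℚ) ^ (i + 1) = 2 * 2 ^ i := pow_succ' 2 i
  have stay : IsBlandSwitch n π (.b i) (.b (i + 1)) :=
    isBlandSwitch_stay (hfill.optimalBelow hπ ht h1 hin.le hcap (by linarith)) h1 hin
      val_a.ge (by linarith) (by linarith) (by linarith)
  have run := stay.blandRun hπ (j := i) (b_notMem_above le_rfl)
  have hcap' : CappedAbove n i (BVal n (update π (.b i) (.b (i + 1))) (.b (i + 1)))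
      (update π (.b i) (.b (i + 1))) := by
    rw [stay.BVal_update_target hπ]
    exact hcap.congr hπ run.eqOn
  obtain ⟨π', run', hb', hfill', ht'⟩ := exists_blandRun_of_stay run.isProper h1 hin
    (hfill.update (by grind) (by grind) _) (update_self ..) ht hcap' hrec
  refine ⟨π', ((run.mono i.le_succ le_rfl).trans run').mono le_rfl (by omega), ?_, hfill', ht'⟩
  exact hb'.trans (update_of_ne (by grind) _ _)

end Filled

/-! ### Recounting the lower levels -/

section Recount

variable {n i j k m : ℕ} {π : BV → BV} {X : ℚ}

namespace Settled

lemma BVal_b_of_stay_succ (h : Settled n j X π) (hj : 1 ≤ j) (hb : π (.b j) = .b (j + 1)) :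
    BVal n π (.b j) = X + 3 / 4 - 2 ^ (j + 1) := by
  rw [h.toIsProper.BVal_b_of_stay hb hj h.lt.le, h.BVal_b]
  ring

lemma BVal_a_of_skip_succ (h : Settled n j X π) (hj : 1 ≤ j) (ha : π (.a j) = .a (j + 1)) :
    BVal n π (.a j) = X := by
  rw [h.toIsProper.BVal_a_of_skip ha hj h.lt.le, h.val_succ]

lemma BVal_t (h : Settled n j X π) (ht : π .t = .a (j + 1)) : BVal n π .t = X := by
  rw [h.toIsProper.BVal_t_of_travel ht, h.val_succ]

lemma optimalBelow (h : Settled n j X π) (ht : π .t = .a (j + 1))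
    (ha : ∀ k, 1 ≤ k → k ≤ j → BVal n π (.a k) ≤ X)
    (hlevel : ∀ k, 1 ≤ k → k < i → LevelOptimal n π k) : OptimalBelow n i π := by
  refine ⟨fun k hk1 hkn => ?_, hlevel⟩
  rcases le_or_gt k j with hkj | hkj
  · exact (ha k hk1 hkj).trans (h.BVal_t ht).ge
  · exact h.cappedAbove.BVal_a_le_t h.toIsProper (h.BVal_t ht).ge hkj hkn

lemma blandRun_enter_travel_one (h : Settled n j X π) (hj : 1 ≤ j) (ht : π .t = .a (j + 1))
    (ha : ∀ k, 1 ≤ k → k ≤ j → BVal n π (.a k) ≤ X) (hb : X ≤ BVal n π (.b 1)) :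
    BlandRun n j 2 π (Function.update (Function.update π (.a 1) (.b 1)) .t (.a 1)) := by
  have h1n : 1 ≤ n := hj.trans h.lt.le
  have enter : IsBlandSwitch n π (.a 1) (.b 1) :=
    isBlandSwitch_enter (h.optimalBelow ht ha (by grind)) le_rfl h1n
      (by linarith [ha 1 le_rfl hj])
  have h' := h.update enter (a_notMem_above hj)
  have val_a := h'.toIsProper.BVal_a_of_enter (k := 1) (update_self ..)
  have travel : IsBlandSwitch n (Function.update π (.a 1) (.b 1)) .t (.a 1) := by
    refine isBlandSwitch_travel le_rfl h1n (by grind) ?_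
    rw [h'.BVal_t ht, val_a, enter.BVal_update_target h.toIsProper]
    linarith
  exact (enter.blandRun h.toIsProper (a_notMem_above hj)).trans
    (travel.blandRun h'.toIsProper (t_notMem_above _))

end Settled

lemma recounts_one (n : ℕ) : Recounts n 1 := by
  intro π X h hfill hb ht
  have h1n := h.lt
  have val_b := h.BVal_b_of_stay_succ le_rfl hb
  have val_a := h.toIsProper.BVal_a_of_enter (hfill.enter 1 le_rfl le_rfl)
  have skip : IsBlandSwitch n π (.a 1) (.a (1 + 1)) :=
    isBlandSwitch_skip (h.optimalBelow ht (by grind) (by grind)) le_rfl h1n val_a.ge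
      (by rw [h.val_succ]; linarith)
  have run₁ := skip.blandRun h.toIsProper (a_notMem_above le_rfl)
  have h₁ := h.update skip (a_notMem_above le_rfl)
  set π₁ := update π (.a 1) (.a (1 + 1))
  have skip₁ : π₁ (.a 1) = .a (1 + 1) := update_self ..
  have val_a₁ := h₁.BVal_a_of_skip_succ le_rfl skip₁
  have val_b₁ := h₁.BVal_b_of_stay_succ le_rfl (show π₁ (.b 1) = _ from hb)
  have leave : IsBlandSwitch n π₁ (.b 1) (.a (1 + 1)) :=
    isBlandSwitch_leave (h₁.optimalBelow ht (by grind) (by grind)) le_rfl h1n (by linarith)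
      (by rw [h₁.val_succ, val_a₁]) (by rw [h₁.BVal_t ht]; linarith)
      (h₁.toIsProper.BVal_b_of_stay (show π₁ (.b 1) = _ from hb)).ge
      (by rw [h₁.val_succ]; linarith)
  have run₂ := leave.blandRun h₁.toIsProper (b_notMem_above le_rfl)
  have h₂ := h₁.update leave (b_notMem_above le_rfl)
  have val_a₂ := h₂.BVal_a_of_skip_succ le_rfl skip₁
  have leave₂ : update π₁ (.b 1) (.a (1 + 1)) (.b 1) = .a (1 + 1) := update_self ..
  have val_b₂ := (h₂.toIsProper.BVal_b_of_leave leave₂).trans h₂.val_succ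
  have run₃ := h₂.blandRun_enter_travel_one le_rfl ht (by grind) val_b₂.ge
  exact ⟨_, ((run₁.trans run₂).trans run₃).mono le_rfl (by norm_num),
    ⟨by grind [update_apply], by grind⟩, leave₂, update_self ..⟩

/-- The phase in which `a 1, …, a i` have been switched to board, so as to reach the freshly
settled level `m + 2` through `t`. -/
structure Boarding (n m : ℕ) (X : ℚ) (i : ℕ) (π : BV → BV) : Prop
    extends Settled n (m + 1) X π where
  travel : π .t = .a (m + 1 + 1)
  board : ∀ k, 1 ≤ k → k ≤ i → π (.a k) = .t
  enter : ∀ k, i < k → k ≤ m + 1 → π (.a k) = .b k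
  leave : ∀ k, 1 ≤ k → k ≤ m → π (.b k) = .a (k + 1)
  stay_top : π (.b (m + 1)) = .b (m + 1 + 1)

namespace Boarding

lemma filled (h : Boarding n m X i π) : Filled (i + 1) (m + 1) π :=
  ⟨h.enter, fun k hk1 hk => h.leave k (by omega) (by omega)⟩

lemma BVal_a_of_lt (h : Boarding n m X i π) (hik : i < k) (hkm : k ≤ m + 1) :
    BVal n π (.a k) = X + 3 / 4 - 2 ^ k := by
  rw [h.filled.BVal_a h.toIsProper (by omega) h.lt.le hik hkm,
    h.BVal_b_of_stay_succ (by omega) h.stay_top]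
  ring

lemma BVal_a_of_le (h : Boarding n m X i π) (hi : i ≤ m) (hk1 : 1 ≤ k) (hki : k ≤ i) :
    BVal n π (.a k) = X + 5 / 4 - 2 ^ k := by
  have hmn := h.lt
  rw [h.toIsProper.BVal_a_of_board (h.board k hk1 hki), h.BVal_t h.travel]
  ring

lemma optimalBelow (h : Boarding n m X i π) (hi : i ≤ m) : OptimalBelow n (i + 1) π := by
  have hmn := h.lt
  have val_t := h.BVal_t h.travel
  have bounds_a : ∀ k, 1 ≤ k → k ≤ m + 1 →
      X + 3 / 4 - 2 ^ k ≤ BVal n π (.a k) ∧ BVal n π (.a k) ≤ X + 5 / 4 - 2 ^ k := by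
    intro k hk1 hkm
    rcases lt_or_ge i k with hik | hki
    · rw [h.BVal_a_of_lt hik hkm]; constructor <;> linarith
    · rw [h.BVal_a_of_le hi hk1 hki]; constructor <;> linarith
  have val_b : ∀ k, 1 ≤ k → k ≤ m → BVal n π (.b k) = BVal n π (.a (k + 1)) := fun k hk1 hkm =>
    h.toIsProper.BVal_b_of_leave (h.leave k hk1 hkm)
  have le_b : ∀ k, 1 ≤ k → k ≤ m + 1 → BVal n π (.b k) ≤ X + 5 / 4 - 2 ^ (k + 1) := by
    intro k hk1 hkm
    rcases hkm.eq_or_lt with rfl | hkm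
    · linarith [h.BVal_b_of_stay_succ hk1 h.stay_top]
    · rw [val_b k hk1 (by omega)]; exact (bounds_a (k + 1) (by omega) hkm).2
  refine h.toSettled.optimalBelow h.travel (fun k hk1 hkm => ?_) fun k hk1 hki => ?_
  · linarith [(bounds_a k hk1 hkm).2, two_le_two_pow hk1]
  · have hpow := two_le_two_pow hk1
    have val_a := h.BVal_a_of_le hi hk1 (by omega)
    have bounds_succ := bounds_a (k + 1) (by omega) (by omega)
    have le_b_succ := le_b (k + 1) (by omega) (by omega)
    have le_b := le_b k hk1 (by omega)
    have val_b := val_b k hk1 (by omega)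
    rw [pow_succ] at bounds_succ le_b
    rw [pow_succ, pow_succ] at le_b_succ
    constructor <;> linarith

lemma exists_blandRun (h : Boarding n m X 0 π) (hi : i ≤ m) :
    ∃ π', BlandRun n (m + 1) 0 π π' ∧ Boarding n m X i π' := by
  induction i with
  | zero => exact ⟨π, .refl h.toIsProper, h⟩
  | succ i ih =>
    obtain ⟨π', run, h'⟩ := ih (by omega)
    have hmn := h.lt
    have val_a := h'.BVal_a_of_lt (k := i + 1) (by omega) (by omega)
    have val_a_succ := h'.BVal_a_of_lt (k := i + 1 + 1) (by omega) (by omega)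
    have board : IsBlandSwitch n π' (.a (i + 1)) .t := by
      refine isBlandSwitch_board (h'.optimalBelow (by omega)) (by omega) (by omega)
        (h'.toIsProper.BVal_a_of_enter (h'.enter _ (by omega) (by omega))).ge ?_ ?_
      · rw [val_a, val_a_succ, pow_succ _ (i + 1)]
        linarith [two_le_two_pow (show 1 ≤ i + 1 by omega)]
      · rw [h'.BVal_t h'.travel]
        linarith
    have not_above : .a (i + 1) ∉ above (m + 1) := a_notMem_above (by omega)
    refine ⟨_, (run.trans (board.blandRun h'.toIsProper not_above)).mono le_rfl (by omega),
      h'.toSettled.update board not_above, h'.travel, ?_, ?_, h'.leave, h'.stay_top⟩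
    · grind [update_apply, h'.board]
    · grind [update_apply, h'.enter]

end Boarding

/-- Level `m + 1` is skipped, and every `b k` with `i ≤ k ≤ m` leads through level `m` to it. -/
structure Ladder (n m : ℕ) (X : ℚ) (i : ℕ) (π : BV → BV) : Prop
    extends Settled n (m + 1) X π where
  skip_top : π (.a (m + 1)) = .a (m + 1 + 1)
  stay_top : π (.b (m + 1)) = .b (m + 1 + 1)
  leave_top : π (.b m) = .a (m + 1)
  stay : ∀ k, i ≤ k → k < m → π (.b k) = .b (k + 1)

namespace Ladder

lemma BVal_a_top (h : Ladder n m X i π) : BVal n π (.a (m + 1)) = X :=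
  h.BVal_a_of_skip_succ (by omega) h.skip_top

lemma le_BVal_b (h : Ladder n m X i π) (hk1 : 1 ≤ k) (hik : i ≤ k) (hkm : k ≤ m) :
    X ≤ BVal n π (.b k) := by
  have hmn := h.lt
  induction hkm using Nat.decreasingInduction with
  | self => rw [h.toIsProper.BVal_b_of_leave h.leave_top, h.BVal_a_top]
  | of_succ k hk ih =>
    rw [h.toIsProper.BVal_b_of_stay (h.stay k hik hk)]
    linarith [ih (by omega) (by omega)]

lemma avoidsTravel_a (h : Ladder n m X i π) : AvoidsTravel π (.a (m + 1)) :=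
  .of_apply nofun (h.skip_top ▸ h.toSettled.avoidsTravel_a)

lemma avoidsTravel_b (h : Ladder n m X i π) (hik : i ≤ k) (hkm : k ≤ m) :
    AvoidsTravel π (.b k) := by
  induction hkm using Nat.decreasingInduction with
  | self => exact .of_apply nofun (h.leave_top ▸ h.avoidsTravel_a)
  | of_succ k hk ih => exact .of_apply nofun (h.stay k hik hk ▸ ih (by omega))

lemma avoidsTravel_b_top (h : Ladder n m X i π) : AvoidsTravel π (.b (m + 1)) :=
  .of_apply nofun (h.stay_top ▸ h.cappedAbove.avoids_b _ (Nat.lt_succ_self _) h.lt)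

end Ladder

/-- The phase in which `b m, …, b i` have been switched downwards to lead to level `m + 1`, while
`a 1, …, a m` board. -/
structure Staying (n m : ℕ) (X : ℚ) (i : ℕ) (π : BV → BV) : Prop extends Ladder n m X i π where
  travel : π .t = .a (m + 1 + 1)
  board : ∀ k, 1 ≤ k → k ≤ m → π (.a k) = .t
  leave : ∀ k, 1 ≤ k → k < i → π (.b k) = .a (k + 1)

namespace Staying

lemma BVal_a (h : Staying n m X i π) (hk1 : 1 ≤ k) (hkm : k ≤ m) :
    BVal n π (.a k) = X + 5 / 4 - 2 ^ k := by
  have hmn := h.lt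
  rw [h.toIsProper.BVal_a_of_board (h.board k hk1 hkm), h.BVal_t h.travel]
  ring

lemma BVal_b (h : Staying n m X i π) (hi : i ≤ m) (hk1 : 1 ≤ k) (hki : k < i) :
    BVal n π (.b k) = X + 5 / 4 - 2 ^ (k + 1) := by
  have hmn := h.lt
  rw [h.toIsProper.BVal_b_of_leave (h.leave k hk1 hki), h.BVal_a (by omega) (by omega)]

lemma BVal_a_le (h : Staying n m X i π) (hk1 : 1 ≤ k) (hkm : k ≤ m + 1) :
    BVal n π (.a k) ≤ X := by
  rcases hkm.eq_or_lt with rfl | hkm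
  · exact h.BVal_a_top.le
  · linarith [h.BVal_a hk1 (by omega), two_le_two_pow hk1]

lemma optimalBelow (h : Staying n m X (i + 1) π) (hi : i + 1 ≤ m) : OptimalBelow n i π := by
  refine h.toSettled.optimalBelow h.travel (fun k => h.BVal_a_le) fun k hk1 hki => ?_
  have val_t := h.BVal_t h.travel
  have val_a := h.BVal_a hk1 (by omega)
  have val_a_succ := h.BVal_a (k := k + 1) (by omega) (by omega)
  have val_b := h.BVal_b hi hk1 (by omega)
  have val_b_succ := h.BVal_b (k := k + 1) hi (by omega) (by omega)
  have hpow := two_le_two_pow hk1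
  rw [pow_succ] at val_a_succ val_b
  rw [pow_succ, pow_succ] at val_b_succ
  constructor <;> linarith

lemma exists_blandRun (h : Staying n m X m π) (hi : 1 ≤ i) (him : i ≤ m) :
    ∃ π', BlandRun n (m + 1) 0 π π' ∧ Staying n m X i π' := by
  induction him using Nat.decreasingInduction with
  | self => exact ⟨π, .refl h.toIsProper, h⟩
  | of_succ i him ih =>
    obtain ⟨π', run, h'⟩ := ih (by omega)
    have hmn := h.lt
    have hpow := two_le_two_pow hi
    have val_t := h'.BVal_t h'.travel
    have val_a := h'.BVal_a hi him.le
    have val_a_succ := h'.BVal_a (k := i + 1) (by omega) him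
    have val_b := h'.BVal_b him hi i.lt_succ_self
    have le_b := h'.le_BVal_b (k := i + 1) (by omega) le_rfl him
    rw [pow_succ] at val_a_succ val_b
    have stay : IsBlandSwitch n π' (.b i) (.b (i + 1)) :=
      isBlandSwitch_stay (h'.optimalBelow him) hi (by omega) (by linarith) (by linarith)
        (by linarith) (by linarith)
    have not_above : .b i ∉ above (m + 1) := b_notMem_above (by omega)
    refine ⟨_, (run.trans (stay.blandRun h'.toIsProper not_above)).mono le_rfl (by omega),
      ⟨h'.toSettled.update stay not_above, h'.skip_top, ?_, ?_, ?_⟩, h'.travel, h'.board, ?_⟩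
    · grind [update_apply, h'.stay_top]
    · grind [update_apply, h'.leave_top]
    · grind [update_apply, h'.stay]
    · grind [update_apply, h'.leave]

end Staying

lemma Boarding.exists_staying (h : Boarding n m X m π) (hm : 1 ≤ m) :
    ∃ π', BlandRun n (m + 1) 0 π π' ∧ Staying n m X m π' := by
  have hmn := h.lt
  have skip : IsBlandSwitch n π (.a (m + 1)) (.a (m + 1 + 1)) := by
    refine isBlandSwitch_skip (h.optimalBelow le_rfl) (by omega) hmn
      (h.toIsProper.BVal_a_of_enter (h.enter _ m.lt_succ_self le_rfl)).ge ?_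
    rw [h.BVal_a_of_lt (k := m + 1) (by omega) le_rfl, h.val_succ]
    linarith [two_le_two_pow (show 1 ≤ m + 1 by omega)]
  have not_above : .a (m + 1) ∉ above (m + 1) := a_notMem_above le_rfl
  refine ⟨_, (skip.blandRun h.toIsProper not_above).mono le_rfl (by omega),
    ⟨h.toSettled.update skip not_above, update_self .., h.stay_top, h.leave m hm le_rfl,
      by grind⟩, h.travel, ?_, ?_⟩
  · grind [update_apply, h.board]
  · grind [update_apply, h.leave]

/-- The phase in which levels `1, …, i` are filled again, while `a (i + 1), …, a m` board and
`b i, …, b m` lead to level `m + 1`. -/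
structure Refilling (n m : ℕ) (X : ℚ) (i : ℕ) (π : BV → BV) : Prop extends Ladder n m X i π where
  travel : π .t = .a 1
  filled : Filled 1 i π
  board : ∀ k, i < k → k ≤ m → π (.a k) = .t

lemma Staying.exists_refilling (h : Staying n m X 1 π) (hm : 1 ≤ m) :
    ∃ π', BlandRun n (m + 1) 0 π π' ∧ Refilling n m X 1 π' := by
  have run := h.blandRun_enter_travel_one (by omega) h.travel (fun k => h.BVal_a_le)
    (h.le_BVal_b le_rfl le_rfl hm)
  refine ⟨_, run.mono le_rfl (by omega),
    ⟨h.toSettled.congr run.isProper run.eqOn, ?_, h.stay_top, h.leave_top, h.stay⟩,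
    update_self .., ⟨?_, ?_⟩, ?_⟩
  · grind [update_apply, h.skip_top]
  · grind [update_apply]
  · grind
  · grind [update_apply, h.board]

namespace Refilling

lemma cappedAbove_of_le (h : Refilling n m X i π) (hik : i ≤ k) (hkm : k ≤ m) :
    CappedAbove n k X π := by
  induction hkm using Nat.decreasingInduction with
  | self =>
    exact .of_succ h.cappedAbove h.avoidsTravel_b_top fun _ =>
      ⟨h.toLadder.avoidsTravel_a, h.BVal_a_top.le⟩
  | of_succ k hkm ih =>
    exact .of_succ (ih (by omega)) (h.avoidsTravel_b (by omega) hkm)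
      fun ht => absurd (h.board _ (by omega) hkm) ht

lemma exists_blandRun_succ (h : Refilling n m X i π) (h1 : 1 ≤ i) (him : i < m)
    (hrec : Recounts n i) :
    ∃ π', BlandRun n (m + 1) (2 ^ i) π π' ∧ Refilling n m X (i + 1) π' := by
  have hmn := h.lt
  obtain ⟨π', run, hb, hfill, ht⟩ := exists_blandRun_of_stay h.toIsProper h1 (by omega) h.filled
    (h.stay i le_rfl him) h.travel
    ((h.cappedAbove_of_le le_rfl him.le).mono (h.le_BVal_b (by omega) (by omega) him)) hrec
  have apply_a : ∀ k, i + 1 < k → π' (.a k) = π (.a k) := fun k hk => run.eqOn (x := .a k) hk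
  have apply_b : ∀ k, i < k → π' (.b k) = π (.b k) := fun k hk =>
    (Nat.succ_le_of_lt hk).eq_or_lt.elim (· ▸ hb) (run.eqOn (x := .b k) ·)
  refine ⟨π', run.mono (by omega) le_rfl,
    ⟨h.toSettled.congr run.isProper (run.eqOn.mono (above_antitone (by omega))), ?_, ?_, ?_, ?_⟩,
    ht, hfill, ?_⟩
  · rw [apply_a _ (by omega), h.skip_top]
  · rw [apply_b _ (by omega), h.stay_top]
  · rw [apply_b _ him, h.leave_top]
  · exact fun k hik hkm => (apply_b k (by omega)).trans (h.stay k (by omega) hkm)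
  · exact fun k hik hkm => (apply_a k hik).trans (h.board k (by omega) hkm)

lemma exists_blandRun (h : Refilling n m X 1 π) (h1 : 1 ≤ i) (him : i ≤ m)
    (hrec : ∀ k, 1 ≤ k → k < m → Recounts n k) :
    ∃ π', BlandRun n (m + 1) (2 ^ i - 2) π π' ∧ Refilling n m X i π' := by
  induction i, h1 using Nat.le_induction with
  | base => exact ⟨π, .refl h.toIsProper, h⟩
  | succ i h1 ih =>
    obtain ⟨π₁, run₁, h₁⟩ := ih (by omega)
    obtain ⟨π₂, run₂, h₂⟩ := h₁.exists_blandRun_succ h1 him (hrec i h1 him)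
    have hpow : 2 ^ 1 ≤ 2 ^ i := Nat.pow_le_pow_right two_pos h1
    exact ⟨π₂, (run₁.trans run₂).mono le_rfl (by grind), h₂⟩

lemma isBlandSwitch_leave_top (h : Refilling n m X m π) (hm : 1 ≤ m) :
    IsBlandSwitch n π (.b (m + 1)) (.a (m + 1 + 1)) := by
  have hmn := h.lt
  have hpow := two_le_two_pow hm
  have val_b := (h.toIsProper.BVal_b_of_leave h.leave_top).trans h.BVal_a_top
  have val_t := h.filled.BVal_t h.toIsProper h.travel hm (by omega)
  have val_b_top := h.BVal_b_of_stay_succ (by omega) h.stay_top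
  rw [pow_succ] at val_t
  rw [pow_succ, pow_succ] at val_b_top
  have optimal := h.filled.optimalBelow h.toIsProper h.travel hm (by omega)
    (h.cappedAbove_of_le le_rfl le_rfl) (by linarith)
  have level := h.filled.levelOptimal h.toIsProper h.travel hm (by omega)
    (by rw [val_b, h.BVal_a_top]) (by linarith)
  refine isBlandSwitch_leave (optimal.succ level) (by omega) hmn ?_ ?_ ?_
    (h.toIsProper.BVal_b_of_stay h.stay_top).ge ?_
  all_goals simp only [h.BVal_a_top, h.val_succ, pow_succ]; linarith

lemma exists_blandRun_of_filled (h : Refilling n m X m π) (hm : 1 ≤ m) (hrec : Recounts n m) :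
    ∃ π', BlandRun n (m + 1) (2 ^ m + 1) π π' ∧ Filled 1 (m + 1) π' ∧
      π' (.b (m + 1)) = .a (m + 1 + 1) ∧ π' .t = .a 1 := by
  have hmn := h.lt
  have leave := h.isBlandSwitch_leave_top hm
  have run := leave.blandRun h.toIsProper (j := m + 1) (b_notMem_above le_rfl)
  have h' := h.toSettled.update leave (b_notMem_above le_rfl)
  set π₁ := update π (.b (m + 1)) (.a (m + 1 + 1))
  have skip₁ : π₁ (.a (m + 1)) = .a (m + 1 + 1) := h.skip_top
  have leave₁ : π₁ (.b (m + 1)) = .a (m + 1 + 1) := update_self ..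
  have val_a₁ := h'.BVal_a_of_skip_succ (by omega) skip₁
  have val_b₁ := (h'.toIsProper.BVal_b_of_leave leave₁).trans h'.val_succ
  have hcap : CappedAbove n m X π₁ := .of_succ h'.cappedAbove
    (.of_apply nofun (leave₁ ▸ h'.avoidsTravel_a)) fun _ =>
      ⟨.of_apply nofun (skip₁ ▸ h'.avoidsTravel_a), val_a₁.le⟩
  obtain ⟨π', run', hb', hfill', ht'⟩ := exists_blandRun_of_leave h'.toIsProper hm (by omega)
    (h.filled.update (by simp) (by grind) _) (by grind [update_apply, h.leave_top]) h.travel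
    (val_b₁ ▸ hcap) (val_a₁.trans val_b₁.symm) hrec
  exact ⟨π', (run.trans run').mono le_rfl (by omega), hfill', hb'.trans leave₁, ht'⟩

end Refilling

theorem recounts (hj : 1 ≤ j) : Recounts n j := by
  induction j using Nat.strong_induction_on with
  | _ j ih =>
    obtain rfl | ⟨m, hm, rfl⟩ : j = 1 ∨ ∃ m, 1 ≤ m ∧ j = m + 1 := by
      rcases hj.eq_or_lt with rfl | hj
      · exact .inl rfl
      · exact .inr ⟨j - 1, by omega, by omega⟩
    · exact recounts_one n
    intro π X h hfill hb ht
    have hrec : ∀ k, 1 ≤ k → k < m → Recounts n k := fun k hk1 hkm => ih k (by omega) hk1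
    have start : Boarding n m X 0 π :=
      ⟨h, ht, by grind, fun k hk => hfill.enter k hk, fun k hk1 hkm => hfill.leave k hk1 (by omega),
        hb⟩
    obtain ⟨π₁, run₁, boarding⟩ := start.exists_blandRun le_rfl
    obtain ⟨π₂, run₂, staying⟩ := boarding.exists_staying hm
    obtain ⟨π₃, run₃, staying₁⟩ := staying.exists_blandRun le_rfl hm
    obtain ⟨π₄, run₄, refilling⟩ := staying₁.exists_refilling hm
    obtain ⟨π₅, run₅, refilled⟩ := refilling.exists_blandRun hm le_rfl hrec
    obtain ⟨π₆, run₆, hend⟩ := refilled.exists_blandRun_of_filled hm (ih m (by omega) hm)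
    have run := ((((run₁.trans run₂).trans run₃).trans run₄).trans run₅).trans run₆
    have hpow : 2 ^ 1 ≤ 2 ^ m := Nat.pow_le_pow_right two_pos hm
    exact ⟨π₆, run.mono le_rfl (by grind), hend⟩

end Recount

/-! ### Filling all levels -/

/-- The canonical policy for `2 ^ i - 1`, as far as it matters on the levels `1, …, n`. -/
structure LowBitsSet (n i : ℕ) (π : BV → BV) : Prop extends IsProper n π where
  travel : π .t = .a 1
  enter : ∀ k, 1 ≤ k → k ≤ i → π (.a k) = .b k
  skip : ∀ k, i < k → k ≤ n → π (.a k) = aN n (k + 1)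
  leave : ∀ k, 1 ≤ k → k ≤ n → π (.b k) = aN n (k + 1)

lemma isProper_pi0 {n : ℕ} (hn : 1 ≤ n) : IsProper n (pi0 n) := by
  have reach_aN : ∀ k, k ≤ n + 1 → ∃ j, (pi0 n)^[j] (aN n k) = .s := by
    intro k hk
    induction hk using Nat.decreasingInduction with
    | self => exact ⟨0, aN_top n⟩
    | of_succ k hk ih =>
      obtain ⟨j, hj⟩ := ih
      exact ⟨j + 1, by rwa [aN_of_le (Nat.lt_succ_iff.1 hk)]⟩
  constructor
  · rintro (_ | _ | _ | i | i) hv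
    · exact bEdge_t_iff.2 ⟨1, le_rfl, hn, rfl⟩
    · exact bEdge_s_iff.2 rfl
    · exact bEdge_d_iff.2 rfl
    · exact bEdge_a_iff.2 ⟨hv, .inr (.inl rfl)⟩
    · exact bEdge_b_iff.2 ⟨hv, .inr rfl⟩
  · have reach_of_apply : ∀ v, (∃ j, (pi0 n)^[j] (pi0 n v) = .s) → ∃ j, (pi0 n)^[j] v = .s :=
      fun v ⟨j, hj⟩ => ⟨j + 1, hj⟩
    rintro (_ | _ | _ | i | i) hv
    · have reach_a := reach_aN 1 (by omega)
      rw [aN_of_le hn] at reach_a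
      exact reach_of_apply _ reach_a
    · exact ⟨0, rfl⟩
    · exact ⟨1, rfl⟩
    · exact reach_of_apply _ (reach_aN (i + 1) (Nat.succ_le_succ hv.2))
    · exact reach_of_apply _ (reach_aN (i + 1) (Nat.succ_le_succ hv.2))

lemma lowBitsSet_pi0 {n : ℕ} (hn : 1 ≤ n) : LowBitsSet n 0 (pi0 n) :=
  ⟨isProper_pi0 hn, rfl, by grind, fun _ _ _ => rfl, fun _ _ _ => rfl⟩

namespace LowBitsSet

variable {n i k : ℕ} {π : BV → BV}

lemma filled (h : LowBitsSet n i π) (hin : i ≤ n) : Filled 1 i π :=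
  ⟨h.enter, fun k hk1 hki => by rw [h.leave k hk1 (by omega), aN_of_le (by omega)]⟩

lemma avoidsTravel_and_BVal_aN (h : LowBitsSet n i π) (hik : i < k) (hkn : k ≤ n + 1) :
    AvoidsTravel π (aN n k) ∧ BVal n π (aN n k) = 0 := by
  induction hkn using Nat.decreasingInduction with
  | self =>
    rw [aN_top]
    exact ⟨h.avoidsTravel_s, BVal_s n π⟩
  | of_succ k hk ih =>
    have hkn := Nat.lt_succ_iff.1 hk
    obtain ⟨avoids, val⟩ := ih (by omega)
    rw [aN_of_le hkn]
    refine ⟨.of_apply nofun (h.skip k hik hkn ▸ avoids), ?_⟩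
    rw [h.BVal_eq (v := .a k) ⟨by omega, hkn⟩ nofun, h.skip k hik hkn, rB_skip, val, add_zero]

lemma BVal_a (h : LowBitsSet n i π) (hik : i < k) (hkn : k ≤ n) : BVal n π (.a k) = 0 := by
  simpa only [aN_of_le hkn] using (h.avoidsTravel_and_BVal_aN hik (by omega)).2

lemma BVal_b (h : LowBitsSet n i π) (hik : i < k) (hkn : k ≤ n) : BVal n π (.b k) = 0 := by
  rw [h.BVal_eq (v := .b k) ⟨by omega, hkn⟩ nofun, h.leave k (by omega) hkn, rB_leave,
    (h.avoidsTravel_and_BVal_aN (by omega) (by omega)).2, add_zero]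

lemma cappedAbove (h : LowBitsSet n i π) : CappedAbove n i 0 π where
  avoids_b k hik hkn := .of_apply nofun <| by
    rw [h.leave k (by omega) hkn]
    exact (h.avoidsTravel_and_BVal_aN (by omega) (by omega)).1
  avoids_a k hik hkn _ := by
    simpa only [aN_of_le hkn] using (h.avoidsTravel_and_BVal_aN hik (by omega)).1
  le k hik hkn _ := (h.BVal_a hik hkn).le

lemma of_blandRun {c : ℕ} {π' : BV → BV} (h : LowBitsSet n i π) (hin : i + 1 ≤ n)
    (run : BlandRun n (i + 1) c π π') (hb : π' (.b (i + 1)) = π (.b (i + 1)))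
    (hfill : Filled 1 (i + 1) π') (ht : π' .t = .a 1) : LowBitsSet n (i + 1) π' where
  toIsProper := run.isProper
  travel := ht
  enter := hfill.enter
  skip k hik hkn := (run.eqOn (x := .a k) hik).trans (h.skip k (by omega) hkn)
  leave k hk1 hkn := by
    rcases lt_trichotomy k (i + 1) with hki | rfl | hki
    · rw [hfill.leave k hk1 hki, aN_of_le (by omega)]
    · exact hb.trans (h.leave _ hk1 hkn)
    · exact (run.eqOn (x := .b k) hki).trans (h.leave k hk1 hkn)

lemma exists_blandRun_one (h : LowBitsSet n 0 π) (hn : 1 ≤ n) :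
    ∃ π', BlandRun n 1 1 π π' ∧ LowBitsSet n 1 π' := by
  have val_a : ∀ k, 1 ≤ k → k ≤ n → BVal n π (.a k) = 0 := fun k => h.BVal_a
  have val_t := (h.toIsProper.BVal_t_of_travel h.travel).trans (val_a 1 le_rfl hn)
  have enter : IsBlandSwitch n π (.a 1) (.b 1) := by
    refine isBlandSwitch_enter ⟨fun k hk1 hkn => ?_, by grind⟩ le_rfl hn ?_
    · rw [val_a k hk1 hkn, val_t]
    · rw [val_a 1 le_rfl hn, h.BVal_b one_pos hn]
      norm_num
  have run := enter.blandRun h.toIsProper (j := 1) (a_notMem_above le_rfl)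
  exact ⟨_, run, h.of_blandRun hn run (update_of_ne (by simp) _ _)
    ⟨by grind [update_apply], by grind⟩ h.travel⟩

lemma exists_blandRun_succ (h : LowBitsSet n i π) (h1 : 1 ≤ i) (hin : i < n) :
    ∃ π', BlandRun n (i + 1) (2 ^ i) π π' ∧ LowBitsSet n (i + 1) π' := by
  have val_b := h.BVal_b i.lt_succ_self hin
  obtain ⟨π', run, hb, hfill, ht⟩ := exists_blandRun_of_leave h.toIsProper h1 hin
    (h.filled hin.le) (by rw [h.leave i h1 hin.le, aN_of_le hin]) h.travel
    (val_b ▸ h.cappedAbove) ((h.BVal_a i.lt_succ_self hin).trans val_b.symm) (recounts h1)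
  exact ⟨π', run, h.of_blandRun hin run hb hfill ht⟩

lemma exists_blandRun (h : LowBitsSet n 0 π) (h1 : 1 ≤ i) (hin : i ≤ n) :
    ∃ π', BlandRun n i (2 ^ i - 1) π π' ∧ LowBitsSet n i π' := by
  induction i, h1 using Nat.le_induction with
  | base => exact h.exists_blandRun_one hin
  | succ i h1 ih =>
    obtain ⟨π₁, run₁, h₁⟩ := ih (by omega)
    obtain ⟨π₂, run₂, h₂⟩ := h₁.exists_blandRun_succ h1 hin
    exact ⟨π₂, ((run₁.mono i.le_succ le_rfl).trans run₂).mono le_rfl (by grind), h₂⟩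

end LowBitsSet

theorem stmt17_general (n : ℕ) (hn : 1 ≤ n) (p : BV → ℚ)
    (hp : ∀ v, IsBVertex n v → v ≠ BV.s → 0 < p v)
    (N : DV → DV → ℕ) (hN : IsDBlandNumbering n N)
    (f : ℕ → (DV → DV)) (m : ℕ)
    (h0 : f 0 = twin (pi0 n))
    (hstep : ∀ k < m, IsBlandStepD n p N (f k) (f (k + 1)))
    (hterm : ∀ u u', ¬ DImproving n p (f m) u u') :
    3 * (2 ^ n - 1) ≤ m := by
  obtain ⟨π', run, -⟩ := (lowBitsSet_pi0 hn).exists_blandRun hn le_rfl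
  have steps : StepsAtLeast (IsBlandStepD n p N) (f 0) (3 * (2 ^ n - 1)) (twin π') := by
    rw [h0]
    exact run.steps.map twin (fun _ _ hπ hs => hπ.blandStep hs)
      (fun _ _ => stepsAtLeast_twin_of_blandStep hp hN)
      (isProper_pi0 hn)
  have terminal : ∀ π, ¬ IsBlandStepD n p N (f m) π := fun _ ⟨u, u', hi, _⟩ => hterm u u' hi
  exact steps.le_of_terminal (IsBlandStepD.rightUnique hN) hstep terminal

/-- For every choice of probabilities `p_v ∈ (0,1]` and every Bland numbering `𝒩_{𝔇_n}`,
Bland's policy iteration on `𝔇_n` started at the twin policy of `π_0` performs at least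
`2^n - 1` improving switches before terminating. -/
theorem stmt17 (n : ℕ) (hn : 1 ≤ n) (p : BV → ℚ)
    (hp : ∀ v, IsBVertex n v → v ≠ BV.s → 0 < p v ∧ p v ≤ 1)
    (N : DV → DV → ℕ) (hN : IsDBlandNumbering n N)
    (f : ℕ → (DV → DV)) (m : ℕ)
    (h0 : f 0 = twin (pi0 n))
    (hstep : ∀ k < m, IsBlandStepD n p N (f k) (f (k + 1)))
    (hterm : ∀ u u', ¬ DImproving n p (f m) u u') :
    2 ^ n - 1 ≤ m := by
  have := stmt17_general n hn p (fun v hv hs => (hp v hv hs).1) N hN f m h0 hstep hterm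
  omega
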